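/- arXiv:2206.04408 — 3 statements merged into one kernel-verified Lean document; each statement's English description precedes it below -/
import Mathlib

section
/- Let P be a preference function of span s ≥ 0 over A = {0,1,…,q−1} such that the q-th column function g_q has exactly one cycle C, let n > s, and let I = (I_1,…,I_n) be an initial n-word such that (I_1,…,I_{n−1}) is on C. Then the greedy sequence (P,I) is a de Bruijn sequence of order n: every n-word over A occurs exactly once as a contiguous window of (P,I). -/
/-!
The greedy sequence is read as a trail in the de Bruijn graph: vertices are the `(n-1)`-words,
edges the `n`-words, and no edge is repeated because the greedy rule only appends new windows.

Since there are only `q ^ n` edges, the given fuel suffices and the trail ends at a vertex all of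
whose out-edges are used. Comparing in- and out-degrees along the trail
(`returns_to_start`, `in_full_of_out_full`), the final vertex must be the initial vertex `u₀`, and
then every vertex with all out-edges used also has all in-edges used.

The least preferred edge at a vertex `x ≠ u₀` is taken only after all other edges at `x`
(`Inv.last`). Hence if the least preferred successor `lastStep x` of `x` has all its out-edges
used, the edge from `x` to `lastStep x` is used, and so are all out-edges of `x`. Finally, on the
last `s` letters `lastStep` acts as `g_q`, whose only cycle is `C`; so the `lastStep`-orbit of any
vertex reaches `u₀`, which lies on `C` (`reaches_start`). Going back along that orbit, all
out-edges of all vertices are used, that is, every `n`-word occurs.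
-/

namespace PaperDB

/-- The last `s` entries of `l`. -/
def lastN {α : Type*} (s : ℕ) (l : List α) : List α := l.drop (l.length - s)

/-- The digit appended by the greedy rule, if any: the most preferred digit `c`
(according to the preference function `P`, evaluated at the last `s` digits,
`P x 0` being the most preferred digit) such that the `n`-window created by
appending `c` has not yet occurred as a contiguous subword. -/
def nextDigit (q s n : ℕ) (P : List (ZMod q) → Fin q → ZMod q)
    (l : List (ZMod q)) : Option (ZMod q) :=
  ((List.finRange q).map (fun i => P (lastN s l) i)).find?
    (fun c => !decide ((lastN (n - 1) l ++ [c]) <:+: l))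

/-- Fuel-bounded greedy extension. -/
def greedyAux (q s n : ℕ) (P : List (ZMod q) → Fin q → ZMod q) :
    ℕ → List (ZMod q) → List (ZMod q)
  | 0, l => l
  | f + 1, l =>
    match nextDigit q s n P l with
    | none => l
    | some c => greedyAux q s n P f (l ++ [c])

/-- The greedy sequence `(P, I)`: fuel `q ^ n` provably suffices for the
construction to halt, since every `n`-word occurs at most once. -/
def greedy (q s n : ℕ) (P : List (ZMod q) → Fin q → ZMod q)
    (I : List (ZMod q)) : List (ZMod q) :=
  greedyAux q s n P (q ^ n) I

/-- The number of occurrences of `w` as a length-`n` contiguous window of `l`. -/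
def windowCount (q n : ℕ) (w l : List (ZMod q)) : ℕ :=
  ((List.range (l.length + 1 - n)).filter
    (fun i => decide ((l.drop i).take n = w))).length

/-- `P` is a preference function (of span `s`): it assigns to every `s`-word a
permutation of the alphabet `ZMod q`. -/
def IsPrefFun (q s : ℕ) (P : List (ZMod q) → Fin q → ZMod q) : Prop :=
  ∀ x : List (ZMod q), x.length = s → Function.Bijective (P x)

/-- The `(k+1)`-st column function `g_{k+1}` induced by `P`:
`g(x_1,…,x_s) = (x_2,…,x_s,P_{k+1}(x_1,…,x_s))`. -/
def colFun (q : ℕ) (P : List (ZMod q) → Fin q → ZMod q) (k : Fin q)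
    (x : List (ZMod q)) : List (ZMod q) :=
  (x ++ [P x k]).tail

/-! ### Words and windows -/

lemma length_lastN {α : Type*} {s : ℕ} {l : List α} (h : s ≤ l.length) :
    (lastN s l).length = s := by
  simp [lastN]; omega

lemma lastN_lastN {α : Type*} {s k : ℕ} {l : List α} (h : s ≤ k) (hk : k ≤ l.length) :
    lastN s (lastN k l) = lastN s l := by
  unfold lastN
  rw [List.drop_drop, List.length_drop]
  congr 1
  omega

lemma lastN_self {α : Type*} {k : ℕ} {l : List α} (h : l.length = k) : lastN k l = l := by
  simp [lastN, h]

lemma lastN_tail_append {α : Type*} {k : ℕ} {l : List α} (c : α) (h : k ≤ l.length) :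
    lastN k (l ++ [c]).tail = (lastN k l ++ [c]).tail := by
  unfold lastN
  rw [← List.drop_append_of_le_length (by omega), ← List.drop_one, ← List.drop_one,
    List.drop_drop, List.drop_drop]
  congr 1
  simp
  omega

lemma lastN_succ_tail_append {α : Type*} {k : ℕ} {l : List α} (c : α) (h : k + 1 ≤ l.length) :
    lastN (k + 1) (l ++ [c]).tail = lastN k l ++ [c] := by
  unfold lastN
  rw [← List.drop_append_of_le_length (by omega), ← List.drop_one, List.drop_drop]
  congr 1
  simp
  omega

lemma infix_iff_window {α : Type*} {n : ℕ} {w l : List α} (hw : w.length = n) :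
    w <:+: l ↔ ∃ i, i + n ≤ l.length ∧ (l.drop i).take n = w := by
  constructor
  · rintro ⟨a, b, rfl⟩
    refine ⟨a.length, by simp; omega, ?_⟩
    simp [← hw]
  · rintro ⟨i, -, rfl⟩
    exact (List.take_prefix _ _).isInfix.trans (List.drop_suffix _ _).isInfix

lemma window_append {α : Type*} {n i : ℕ} {l : List α} (c : α) (h : i + n ≤ l.length) :
    ((l ++ [c]).drop i).take n = (l.drop i).take n := by
  rw [List.drop_append_of_le_length (by omega), List.take_append_of_le_length (by simp; omega)]

lemma window_append_last {α : Type*} {n i : ℕ} {l : List α} (c : α) (h : i + n = l.length + 1)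
    (hn : 0 < n) : ((l ++ [c]).drop i).take n = lastN (n - 1) l ++ [c] := by
  have hi : l.length - (n - 1) = i := by omega
  rw [List.drop_append_of_le_length (by omega), List.take_of_length_le (by simp; omega), lastN, hi]

lemma window_eq_append {α : Type*} (d : α) {n i : ℕ} {l : List α} (h : i + n ≤ l.length)
    (hn : 0 < n) :
    (l.drop i).take n = (l.drop i).take (n - 1) ++ [l.getD (i + (n - 1)) d] := by
  obtain ⟨k, rfl⟩ : ∃ k, n = k + 1 := ⟨n - 1, by omega⟩
  have hk : i + k < l.length := by omega
  rw [List.take_add_one]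
  simp [List.getElem?_eq_getElem hk]

lemma window_eq_cons {α : Type*} (d : α) {n i : ℕ} {l : List α} (h : i + n ≤ l.length)
    (hn : 0 < n) :
    (l.drop i).take n = l.getD i d :: (l.drop (i + 1)).take (n - 1) := by
  obtain ⟨k, rfl⟩ : ∃ k, n = k + 1 := ⟨n - 1, by omega⟩
  have hk : i < l.length := by omega
  rw [List.drop_eq_getElem_cons hk, List.take_succ_cons]
  simp [List.getElem?_eq_getElem hk]

/-! ### Degree counting along a trail -/

section Trail

variable {β D : Type*} {N : ℕ} {V : ℕ → β} {o d : ℕ → D}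

open Classical in
/-- Number of departures from `y` versus number of arrivals at `y` along the walk
`V 0, …, V N`. -/
lemma departures_add_eq (V : ℕ → β) (N : ℕ) (y : β) :
    ((Finset.range N).filter fun i => V i = y).card + (if V N = y then 1 else 0) =
      ((Finset.range N).filter fun i => V (i + 1) = y).card + (if V 0 = y then 1 else 0) := by
  rw [Finset.card_filter, Finset.card_filter,
    ← Finset.sum_range_succ (fun i => if V i = y then 1 else 0),
    ← Finset.sum_range_succ' (fun i => if V i = y then 1 else 0)]

open Classical in
lemma card_le_departures [Fintype D] {y : β} (hfull : ∀ c, ∃ i < N, V i = y ∧ o i = c) :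
    Fintype.card D ≤ ((Finset.range N).filter fun i => V i = y).card := by
  rw [← Finset.card_univ]
  apply Finset.card_le_card_of_surjOn o
  intro c _
  obtain ⟨i, hi, h1, h2⟩ := hfull c
  exact ⟨i, by simp [hi, h1], h2⟩

lemma injOn_arrivals (hinj : ∀ i < N, ∀ j < N, d i = d j → V (i + 1) = V (j + 1) → i = j)
    [DecidableEq β] (y : β) :
    Set.InjOn d ((Finset.range N).filter fun i => V (i + 1) = y) := by
  intro i hi j hj hij
  simp only [Finset.coe_filter, Finset.mem_range, Set.mem_ofPred_eq] at hi hj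
  exact hinj i hi.1 j hj.1 hij (hi.2.trans hj.2.symm)

/-- A trail (with arrivals at each vertex labelled injectively by `d`) that exhausts the
departures from its final vertex is closed. -/
lemma returns_to_start [Finite D]
    (hinj : ∀ i < N, ∀ j < N, d i = d j → V (i + 1) = V (j + 1) → i = j)
    (hfull : ∀ c, ∃ i < N, V i = V N ∧ o i = c) : V 0 = V N := by
  classical
  have := Fintype.ofFinite D
  by_contra hne
  have h1 := departures_add_eq V N (V N)
  have h2 := card_le_departures hfull
  have h3 := Finset.card_le_card_of_injOn d (fun _ _ => Finset.mem_univ _)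
    (injOn_arrivals hinj (V N))
  rw [Finset.card_univ] at h3
  simp only [if_true, if_neg hne] at h1
  omega

/-- On a closed trail, a vertex with all departures used has all arrivals used. -/
lemma in_full_of_out_full [Finite D]
    (hinj : ∀ i < N, ∀ j < N, d i = d j → V (i + 1) = V (j + 1) → i = j)
    (hclosed : V 0 = V N) {y : β} (hfull : ∀ c, ∃ i < N, V i = y ∧ o i = c) (c : D) :
    ∃ i < N, V (i + 1) = y ∧ d i = c := by
  classical
  have := Fintype.ofFinite D
  have h1 := departures_add_eq V N y
  have h2 := card_le_departures hfull
  rw [hclosed] at h1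
  have h4 := Finset.surjOn_of_injOn_of_card_le d
    (s := (Finset.range N).filter fun i => V (i + 1) = y) (t := Finset.univ)
    (fun _ _ => Finset.mem_coe.2 (Finset.mem_univ _)) (injOn_arrivals hinj y)
    (by rw [Finset.card_univ]; omega)
  obtain ⟨i, hi, hc⟩ := h4 (Finset.mem_coe.2 (Finset.mem_univ c))
  simp only [Finset.coe_filter, Finset.mem_range, Set.mem_ofPred_eq] at hi
  exact ⟨i, hi.1, hi.2, hc⟩

end Trail

/-! ### Invariants of the greedy construction -/

/-- The properties of the partial sequences `l` produced by the greedy rule from `I`. -/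
structure Inv (q s n : ℕ) (P : List (ZMod q) → Fin q → ZMod q) (gq : Fin q)
    (I l : List (ZMod q)) : Prop where
  /-- `l` extends `I`. -/
  pre : I <+: l
  /-- No window is repeated. -/
  inj : ∀ i j, i + n ≤ l.length → j + n ≤ l.length →
    (l.drop i).take n = (l.drop j).take n → i = j
  /-- Away from the initial vertex, the least preferred edge is used only after all others. -/
  last : ∀ x : List (ZMod q), x.length = n - 1 → x ++ [P (lastN s x) gq] <:+: l →
    x = I.take (n - 1) ∨ ∀ c, x ++ [c] <:+: l

lemma Inv.base {q s n : ℕ} {P : List (ZMod q) → Fin q → ZMod q} {gq : Fin q}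
    {I : List (ZMod q)} (hI : I.length = n) (hn : 0 < n) : Inv q s n P gq I I where
  pre := List.prefix_rfl
  inj i j hi hj _ := by omega
  last x hx h := by
    left
    rw [← h.eq_of_length (by simp; omega), List.take_append_of_le_length (by omega),
      List.take_of_length_le (by omega)]

lemma Inv.step {q s n : ℕ} {P : List (ZMod q) → Fin q → ZMod q} {gq : Fin q}
    (hs : s < n) (hP : IsPrefFun q s P) (hgq : (gq : ℕ) = q - 1)
    {I l : List (ZMod q)} (hI : I.length = n) (h : Inv q s n P gq I l) {c : ZMod q}
    (hc : nextDigit q s n P l = some c) : Inv q s n P gq I (l ++ [c]) := by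
  have hlen : n ≤ l.length := hI ▸ h.pre.length_le
  unfold nextDigit at hc
  rw [List.find?_eq_some_iff_getElem] at hc
  obtain ⟨hnew, k, hk, hkc, hprev⟩ := hc
  simp only [Bool.not_eq_true', decide_eq_false_iff_not] at hnew
  have hlw : (lastN (n - 1) l).length = n - 1 := length_lastN (by omega)
  have hold : ∀ i, i + n ≤ l.length → (l.drop i).take n ≠ lastN (n - 1) l ++ [c] :=
    fun i hi he => hnew ((infix_iff_window (by simp; omega)).2 ⟨i, hi, he⟩)
  refine ⟨h.pre.trans (List.prefix_append _ _), ?_, ?_⟩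
  · intro i j hi hj hij
    simp only [List.length_append, List.length_singleton] at hi hj
    rcases Nat.lt_or_ge l.length (i + n) with hi' | hi' <;>
      rcases Nat.lt_or_ge l.length (j + n) with hj' | hj'
    · omega
    · rw [window_append_last c (by omega) (by omega), window_append c hj'] at hij
      exact absurd hij.symm (hold j hj')
    · rw [window_append c hi', window_append_last c (by omega) (by omega)] at hij
      exact absurd hij (hold i hi')
    · rw [window_append c hj', window_append c hi'] at hij
      exact h.inj i j hi' hj' hij
  · intro x hx hxl
    have hmono : l <:+: l ++ [c] := (List.prefix_append _ _).isInfix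
    obtain ⟨i, hi, he⟩ := (infix_iff_window (n := n) (by simp; omega)).1 hxl
    simp only [List.length_append, List.length_singleton] at hi
    rcases Nat.lt_or_ge l.length (i + n) with hi' | hi'
    · right
      rw [window_append_last c (by omega) (by omega)] at he
      obtain ⟨hxe, hce⟩ := List.append_inj he (by omega)
      subst hxe
      rw [lastN_lastN (by omega) (by omega)] at hce
      have hbij := hP (lastN s l) (length_lastN (by omega))
      simp only [List.getElem_map, List.getElem_finRange] at hkc hprev
      -- the appended digit is the least preferred one, so its rank is the last rank
      have hkg : k = q - 1 := by
        have := hbij.1 (hkc.trans (List.singleton_inj.1 hce))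
        rw [← hgq, ← this]; simp
      intro c'
      obtain ⟨r, rfl⟩ := hbij.2 c'
      rcases Nat.lt_or_ge r k with hr | hr
      · have := hprev r hr
        simp only [Bool.not_not, decide_eq_true_eq] at this
        exact List.IsInfix.trans (by simpa using this) hmono
      · have hrg : r = gq := Fin.ext (by omega)
        rw [hrg]
        rw [lastN_lastN (by omega) (by omega)] at hxl
        exact hxl
    · rw [window_append c hi'] at he
      rcases h.last x hx ((infix_iff_window (by simp; omega)).2 ⟨i, hi', he⟩) with h1 | h1
      · exact Or.inl h1
      · exact Or.inr fun c' => (h1 c').trans hmono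

/-- Either the greedy extension has halted, or it has used up all its fuel. -/
lemma greedyAux_spec {q s n : ℕ} {P : List (ZMod q) → Fin q → ZMod q} {gq : Fin q}
    (hs : s < n) (hP : IsPrefFun q s P) (hgq : (gq : ℕ) = q - 1)
    {I : List (ZMod q)} (hI : I.length = n) (f : ℕ) :
    ∀ l, Inv q s n P gq I l → Inv q s n P gq I (greedyAux q s n P f l) ∧
      (nextDigit q s n P (greedyAux q s n P f l) = none ∨
        (greedyAux q s n P f l).length = l.length + f) := by
  induction f with
  | zero => intro l hl; exact ⟨hl, Or.inr rfl⟩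
  | succ f ih =>
    intro l hl
    rw [greedyAux]
    cases hnd : nextDigit q s n P l with
    | none => exact ⟨hl, Or.inl hnd⟩
    | some c =>
      obtain ⟨h1, h2⟩ := ih _ (hl.step hs hP hgq hI hnd)
      refine ⟨h1, h2.imp id fun h => ?_⟩
      simp only [h, List.length_append, List.length_singleton]
      omega

lemma Inv.length_lt {q s n : ℕ} [NeZero q] {P : List (ZMod q) → Fin q → ZMod q} {gq : Fin q}
    {I l : List (ZMod q)} (h : Inv q s n P gq I l) : l.length < n + q ^ n := by
  by_contra hcon
  have hwin : ∀ i ∈ Finset.range (q ^ n + 1), ((l.drop i).take n).length = n := by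
    intro i hi
    simp only [Finset.mem_range] at hi
    simp
    omega
  let F : Fin (q ^ n + 1) → List.Vector (ZMod q) n :=
    fun i => ⟨(l.drop i).take n, hwin i (Finset.mem_range.2 i.2)⟩
  have hF : Function.Injective F := by
    intro i j hij
    have := congrArg Subtype.val hij
    exact Fin.ext (h.inj i j (by omega) (by omega) this)
  have := Fintype.card_le_of_injective F hF
  simp [ZMod.card] at this

/-! ### The least preferred successor -/

/-- The successor of the vertex `x` of the de Bruijn graph along its least preferred edge. -/
def lastStep (q s : ℕ) (P : List (ZMod q) → Fin q → ZMod q) (gq : Fin q)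
    (x : List (ZMod q)) : List (ZMod q) :=
  (x ++ [P (lastN s x) gq]).tail

lemma length_lastStep_iterate {q s : ℕ} {P : List (ZMod q) → Fin q → ZMod q} {gq : Fin q}
    (t : ℕ) (x : List (ZMod q)) : ((lastStep q s P gq)^[t] x).length = x.length := by
  induction t with
  | zero => rfl
  | succ t ih => rw [Function.iterate_succ_apply', ← ih]; simp [lastStep]

lemma length_colFun_iterate {q : ℕ} {P : List (ZMod q) → Fin q → ZMod q} {gq : Fin q}
    (t : ℕ) (x : List (ZMod q)) : ((colFun q P gq)^[t] x).length = x.length := by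
  induction t with
  | zero => rfl
  | succ t ih => rw [Function.iterate_succ_apply', ← ih]; simp [colFun]

lemma lastN_lastStep_iterate {q s : ℕ} {P : List (ZMod q) → Fin q → ZMod q} {gq : Fin q}
    (t : ℕ) (x : List (ZMod q)) (hx : s ≤ x.length) :
    lastN s ((lastStep q s P gq)^[t] x) = (colFun q P gq)^[t] (lastN s x) := by
  induction t with
  | zero => rfl
  | succ t ih =>
    rw [Function.iterate_succ_apply', Function.iterate_succ_apply', ← ih, lastStep,
      lastN_tail_append _ (by rw [length_lastStep_iterate]; exact hx), colFun]

/-- If the last column function has only the cycle `C`, each of its orbits passes through each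
vertex of `C`. -/
lemma colFun_reaches {q s : ℕ} [NeZero q] {P : List (ZMod q) → Fin q → ZMod q} {gq : Fin q}
    {v : List (ZMod q)} {m : ℕ} (hm : 0 < m) (hper : (colFun q P gq)^[m] v = v)
    (huniq : ∀ w : List (ZMod q), w.length = s →
      ∀ m', 0 < m' → (colFun q P gq)^[m'] w = w →
        w ∈ Set.range fun t => (colFun q P gq)^[t] v)
    (r' : ℕ) (y : List (ZMod q)) (hy : y.length = s) :
    ∃ t, (colFun q P gq)^[t] y = (colFun q P gq)^[r'] v := by
  set g := colFun q P gq with hg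
  have hfin : {l : List (ZMod q) | l.length = s}.Finite := List.finite_length_eq _ _
  obtain ⟨i, -, j, -, hne, hij⟩ := Set.infinite_univ.exists_ne_map_eq_of_mapsTo
    (f := fun t : ℕ => g^[t] y) (t := {l : List (ZMod q) | l.length = s})
    (fun t _ => (length_colFun_iterate t y).trans hy) hfin
  wlog hlt : i < j generalizing i j
  · exact this j i hne.symm hij.symm (by omega)
  obtain ⟨r, hr⟩ := huniq (g^[i] y) ((length_colFun_iterate i y).trans hy) (j - i) (by omega) (by
    rw [← Function.iterate_add_apply, Nat.sub_add_cancel hlt.le]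
    exact hij.symm)
  -- advance from `g^[r] v` to `g^[r * m + r'] v = g^[r'] v`
  refine ⟨(r * (m - 1) + r') + i, ?_⟩
  simp only at hr
  rw [Function.iterate_add_apply, ← hr, ← Function.iterate_add_apply]
  have harith : r * (m - 1) + r' + r = r' + m * r := by
    obtain ⟨k, rfl⟩ : ∃ k, m = k + 1 := ⟨m - 1, by omega⟩
    simp only [Nat.add_sub_cancel]
    ring
  rw [harith, Function.iterate_add_apply, Function.iterate_mul]
  congr 1
  exact Function.iterate_fixed hper r

/-- After reaching the vertex `I₁…I_s` of `C`, the orbit spells out the remaining letters of the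
initial vertex. -/
lemma lastStep_follows {q s n : ℕ} {P : List (ZMod q) → Fin q → ZMod q} {gq : Fin q}
    {I : List (ZMod q)} (hI : I.length = n)
    (hIrec : ∀ j, s ≤ j → j < n - 1 →
      I.getD j 0 = P ((I.drop (j - s)).take s) gq)
    {z : List (ZMod q)} (hz : z.length = n - 1) (hzI : lastN s z = I.take s) (j : ℕ)
    (hj : s + j ≤ n - 1) :
    lastN (s + j) ((lastStep q s P gq)^[j] z) = I.take (s + j) := by
  induction j with
  | zero => exact hzI
  | succ j ih =>
    have ih := ih (by omega)
    have hl := length_lastStep_iterate (q := q) (s := s) (P := P) (gq := gq) j z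
    rw [Function.iterate_succ_apply', lastStep, ← add_assoc, lastN_succ_tail_append _ (by omega),
      ← lastN_lastN (k := s + j) (s := s) (by omega) (by omega), ih]
    have h1 : lastN s (I.take (s + j)) = (I.drop j).take s := by
      rw [lastN, List.length_take, List.drop_take]
      have : min (s + j) I.length - s = j := by omega
      rw [this]
      congr 1
      omega
    have h2 := hIrec (s + j) (by omega) (by omega)
    rw [Nat.add_sub_cancel_left] at h2
    have hk : s + j < I.length := by omega
    rw [h1, ← h2, List.take_add_one]
    simp [List.getElem?_eq_getElem hk]

/-- Every vertex leads to the initial vertex along least preferred edges. -/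
lemma reaches_start {q s n : ℕ} [NeZero q] (hs : s < n)
    {P : List (ZMod q) → Fin q → ZMod q} {gq : Fin q}
    {v : List (ZMod q)} {m : ℕ} (hm : 0 < m) (hper : (colFun q P gq)^[m] v = v)
    (huniq : ∀ w : List (ZMod q), w.length = s →
      ∀ m', 0 < m' → (colFun q P gq)^[m'] w = w →
        w ∈ Set.range fun t => (colFun q P gq)^[t] v)
    {I : List (ZMod q)} (hI : I.length = n)
    (hIC : I.take s ∈ Set.range fun t => (colFun q P gq)^[t] v)
    (hIrec : ∀ j, s ≤ j → j < n - 1 →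
      I.getD j 0 = P ((I.drop (j - s)).take s) gq)
    {x : List (ZMod q)} (hx : x.length = n - 1) :
    ∃ t, (lastStep q s P gq)^[t] x = I.take (n - 1) := by
  obtain ⟨r', hr'⟩ := hIC
  obtain ⟨t, ht⟩ := colFun_reaches hm hper huniq r' (lastN s x) (length_lastN (by omega))
  refine ⟨(n - 1 - s) + t, ?_⟩
  have hlen := (length_lastStep_iterate (q := q) (s := s) (P := P) (gq := gq) t x).trans hx
  have := lastStep_follows (P := P) (gq := gq) hI hIrec hlen
    ((lastN_lastStep_iterate t x (by omega)).trans (ht.trans hr')) (n - 1 - s) (by omega)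
  rw [Nat.add_sub_cancel' (by omega), ← Function.iterate_add_apply] at this
  rwa [lastN_self ((length_lastStep_iterate _ x).trans hx)] at this

/-! ### Halting sequences contain all words -/

/-- In a halted greedy sequence all out-edges of the initial vertex are used, and any vertex with
all out-edges used has all in-edges used. -/
lemma halted {q s n : ℕ} [NeZero q] {P : List (ZMod q) → Fin q → ZMod q} {gq : Fin q}
    (hs : s < n) (hP : IsPrefFun q s P)
    {I l : List (ZMod q)} (hI : I.length = n) (h : Inv q s n P gq I l)
    (hnone : nextDigit q s n P l = none) :
    (∀ c, I.take (n - 1) ++ [c] <:+: l) ∧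
      ∀ y : List (ZMod q), y.length = n - 1 → (∀ c, y ++ [c] <:+: l) → ∀ c, c :: y <:+: l := by
  have hlen : n ≤ l.length := hI ▸ h.pre.length_le
  have hlw : (lastN (n - 1) l).length = n - 1 := length_lastN (by omega)
  have hend : ∀ c, lastN (n - 1) l ++ [c] <:+: l := by
    intro c
    obtain ⟨r, rfl⟩ := (hP (lastN s l) (length_lastN (by omega))).2 c
    rw [nextDigit, List.find?_eq_none] at hnone
    simpa using hnone (P (lastN s l) r) (by simp)
  set N := l.length + 1 - n with hN
  let V : ℕ → List (ZMod q) := fun i => (l.drop i).take (n - 1)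
  have hV0 : V 0 = I.take (n - 1) := by
    obtain ⟨b, rfl⟩ := h.pre
    simp only [V, List.drop_zero]
    rw [List.take_append_of_le_length (by omega)]
  have hVN : V N = lastN (n - 1) l := by
    simp only [V, lastN]
    rw [List.take_of_length_le (by simp; omega)]
    congr 1
    omega
  have hinj : ∀ i < N, ∀ j < N, l.getD i 0 = l.getD j 0 → V (i + 1) = V (j + 1) → i = j := by
    intro i hi j hj hd hv
    refine h.inj i j (by omega) (by omega) ?_
    rw [window_eq_cons 0 (i := i) (by omega) (by omega),
      window_eq_cons 0 (i := j) (by omega) (by omega), hd]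
    exact congrArg _ hv
  have hout : ∀ y : List (ZMod q), y.length = n - 1 → (∀ c, y ++ [c] <:+: l) →
      ∀ c, ∃ i < N, V i = y ∧ l.getD (i + (n - 1)) 0 = c := by
    intro y hy hfull c
    obtain ⟨i, hi, he⟩ := (infix_iff_window (n := n) (by simp; omega)).1 (hfull c)
    rw [window_eq_append 0 hi (by omega)] at he
    obtain ⟨h1, h2⟩ := List.append_inj he (by simp; omega)
    exact ⟨i, by omega, h1, List.singleton_inj.1 h2⟩
  have hclosed : V 0 = V N := returns_to_start hinj (by rw [hVN]; exact hout _ hlw hend)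
  refine ⟨?_, ?_⟩
  · rw [← hV0, hclosed, hVN]
    exact hend
  · intro y hy hfull c
    obtain ⟨i, hi, h1, h2⟩ := in_full_of_out_full hinj hclosed (hout y hy hfull) c
    refine (infix_iff_window (n := n) (by simp; omega)).2 ⟨i, by omega, ?_⟩
    rw [window_eq_cons 0 (by omega) (by omega), h2]
    exact congrArg _ h1

lemma windowCount_eq_one {q s n : ℕ} {P : List (ZMod q) → Fin q → ZMod q} {gq : Fin q}
    {I l w : List (ZMod q)} (h : Inv q s n P gq I l) (hw : w.length = n) (hwl : w <:+: l) :
    windowCount q n w l = 1 := by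
  obtain ⟨i, hi, he⟩ := (infix_iff_window hw).1 hwl
  unfold windowCount
  rw [← List.toFinset_card_of_nodup (List.nodup_range.filter _), Finset.card_eq_one]
  refine ⟨i, ?_⟩
  ext j
  simp only [List.mem_toFinset, List.mem_filter, List.mem_range, decide_eq_true_eq,
    Finset.mem_singleton]
  constructor
  · rintro ⟨hj, hje⟩
    exact h.inj j i (by omega) hi (hje.trans he.symm)
  · rintro rfl
    exact ⟨by omega, he⟩

/-- the corollary producing full de Bruijn sequences.
If the last column function `g_q` has exactly one cycle `C` (generated by a
periodic vertex `v`, and every periodic point of `g_q` among `s`-words lies on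
`C`), and `(I_1,…,I_{n-1})` is on `C`, then `(P,I)` is a de Bruijn sequence of
order `n`: every `n`-word occurs exactly once as a contiguous window. -/
theorem corollary_full_deBruijn (q s n : ℕ) (hq : 2 ≤ q) (hs : s < n)
    (P : List (ZMod q) → Fin q → ZMod q) (hP : IsPrefFun q s P)
    (gq : Fin q) (hgq : (gq : ℕ) = q - 1)
    (v : List (ZMod q)) (hv : v.length = s)
    (m : ℕ) (hm : 0 < m) (hper : (colFun q P gq)^[m] v = v)
    (C : Set (List (ZMod q)))
    (hC : C = Set.range fun t => (colFun q P gq)^[t] v)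
    (huniq : ∀ w : List (ZMod q), w.length = s →
      ∀ m', 0 < m' → (colFun q P gq)^[m'] w = w → w ∈ C)
    (I : List (ZMod q)) (hI : I.length = n)
    (hIC : I.take s ∈ C)
    (hIrec : ∀ j, s ≤ j → j < n - 1 →
      I.getD j 0 = P ((I.drop (j - s)).take s) gq) :
    ∀ w : List (ZMod q), w.length = n → windowCount q n w (greedy q s n P I) = 1 := by
  subst hC
  have : NeZero q := ⟨by omega⟩
  obtain ⟨hinv, hhalt⟩ := greedyAux_spec (s := s) hs hP hgq hI (q ^ n) I
    (Inv.base hI (by omega))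
  change Inv q s n P gq I (greedy q s n P I) at hinv
  have hnone : nextDigit q s n P (greedy q s n P I) = none := by
    refine hhalt.resolve_right fun hl => ?_
    have := hinv.length_lt
    simp only [greedy] at this
    omega
  obtain ⟨hstart, hio⟩ := halted hs hP hI hinv hnone
  -- going back along least preferred edges from the initial vertex, all out-edges are used
  have hback : ∀ t, ∀ x : List (ZMod q), x.length = n - 1 →
      (lastStep q s P gq)^[t] x = I.take (n - 1) →
      ∀ c, x ++ [c] <:+: greedy q s n P I := by
    intro t
    induction t with
    | zero =>
      intro x _ hx0
      rw [Function.iterate_zero_apply] at hx0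
      rw [hx0]
      exact hstart
    | succ t ih =>
      intro x hx hxt
      rw [Function.iterate_succ_apply] at hxt
      have hlen : (lastStep q s P gq x).length = n - 1 := by
        simpa [lastStep] using hx
      have hin := hio _ hlen (ih _ hlen hxt)
      have hedge : x ++ [P (lastN s x) gq] <:+: greedy q s n P I := by
        have := hin ((x ++ [P (lastN s x) gq]).head (by simp))
        rwa [lastStep, List.cons_head_tail] at this
      rcases hinv.last x hx hedge with h | h
      · rw [h]
        exact hstart
      · exact h
  intro w hw
  have hw0 : w ≠ [] := List.ne_nil_of_length_pos (by omega)
  have hdl : w.dropLast.length = n - 1 := by simp [hw]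
  obtain ⟨t, ht⟩ := reaches_start hs hm hper huniq hI hIC hIrec hdl
  have := hback t _ hdl ht (w.getLast hw0)
  rw [List.dropLast_append_getLast] at this
  exact windowCount_eq_one hinv hw this
end PaperDB
end

section
/- Let q ≥ 2, n ≥ 2, and gcd(d,q) = 1. Define the generalized prefer-same preference function S by S_j(a) = a + (j−1)·d (mod q) for j = 1,…,q, and let I = (I_1,…,I_n) be any n-word satisfying I_{k+1} = I_k + d(q−1) (mod q) for k = 1,…,n−1. Then the greedy sequence s_n = (S,I) is a full de Bruijn sequence of order n: every n-word over A occurs exactly once as a contiguous window of s_n. -/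
/-!
Consider the de Bruijn graph: vertices are the `(n-1)`-words, edges are the `n`-words, and the
greedy sequence spells a walk that starts at `v₀ = (I_1, …, I_{n-1})` along the edge `I` and never
repeats an edge (`Inv`).

The walk can only get stuck at a vertex all of whose `q` out-edges are used. As every vertex has
only `q` in-edges, counting in- and out-edges shows that this vertex is `v₀`. So the walk is closed,
every vertex has as many used in-edges as used out-edges, and `v₀` is *full*: all its out-edges,
hence all its in-edges, are used.

Let `L x` be the successor of `x` along its least preferred digit, i.e. the last digit minus `d`.
If `L x` is full, then the edge from `x` to `L x` is used; for `x ≠ v₀` the greedy rule uses this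
edge last among the out-edges of `x`, so `x` is full as well. Under iteration of `L`, every vertex
becomes an alternating word with step `-d` after `n - 2` steps. Since `d` is a unit modulo `q`, the
alternating words form a single `L`-cycle, and `v₀` is one of them. Hence every vertex lies on an
`L`-path to `v₀`, every vertex is full, and every `n`-word occurs.
-/


namespace PaperDB

/-- The generalized prefer-same preference function `S^{(q,d)}`, of span 1:
`S_j(a) = a + (j-1)·d (mod q)` for `j = 1,…,q`; the `Fin q`-index `j` denotes
column `j+1`. -/
def SprefL (q d : ℕ) : List (ZMod q) → Fin q → ZMod q :=
  fun x j => x.headI + ((j : ℕ) : ZMod q) * (d : ZMod q)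

/-! ### Windows as edges of a walk -/

/-- The list of all length-`n` windows of `l`, from left to right. In the de Bruijn graph, whose
vertices are the `(n-1)`-words and whose edges are the `n`-words, these are the edges of the
walk spelled by `l`. -/
def windows {α : Type*} (n : ℕ) (l : List α) : List (List α) :=
  (List.range (l.length + 1 - n)).map (fun i => (l.drop i).take n)

lemma windows_snoc {α : Type*} {n : ℕ} (hn : 2 ≤ n) (l : List α) (hl : n ≤ l.length) (c : α) :
    windows n (l ++ [c]) = windows n l ++ [lastN (n - 1) l ++ [c]] := by
  unfold windows lastN
  have h : (l ++ [c]).length + 1 - n = (l.length + 1 - n) + 1 := by simp; omega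
  rw [h, List.range_succ, List.map_append]
  congr 1
  · apply List.map_congr_left
    intro i hi
    rw [List.mem_range] at hi
    rw [List.drop_append_of_le_length (by omega), List.take_append_of_le_length (by simp; omega)]
  · simp only [List.map_cons, List.map_nil]
    rw [List.drop_append_of_le_length (by omega), List.take_of_length_le (by simp; omega),
      show l.length + 1 - n = l.length - (n - 1) by omega]

lemma length_of_mem_windows {α : Type*} {n : ℕ} {l w : List α} (h : w ∈ windows n l) :
    w.length = n := by
  simp only [windows, List.mem_map, List.mem_range] at h
  obtain ⟨i, hi, rfl⟩ := h
  simp; omega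

lemma infix_iff_mem_windows {α : Type*} {n : ℕ} {l w : List α} (hw : w.length = n) :
    w <:+: l ↔ w ∈ windows n l := by
  simp only [windows, List.mem_map, List.mem_range]
  constructor
  · rintro ⟨s, t, rfl⟩
    refine ⟨s.length, by simp; omega, ?_⟩
    simp [← hw]
  · rintro ⟨i, _, rfl⟩
    exact (List.take_prefix _ _).isInfix.trans (List.drop_suffix _ _).isInfix

lemma windowCount_eq_count (q n : ℕ) (w l : List (ZMod q)) :
    windowCount q n w l = (windows n l).count w := by
  unfold windowCount windows
  rw [List.count_eq_countP, List.countP_map, List.countP_eq_length_filter]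
  congr 2
  ext i
  rw [Bool.eq_iff_iff]
  simp

/-! ### The greedy rule for `SprefL` -/

/-- The digit `a - d` least preferred by `SprefL q d` after a word `v` with last digit `a`. -/
def leastPref (q d : ℕ) (v : List (ZMod q)) : ZMod q := (lastN 1 v).headI - (d : ZMod q)

lemma lastN_one_lastN {α : Type*} {m : ℕ} (hm : 1 ≤ m) (l : List α) (hl : m ≤ l.length) :
    lastN 1 (lastN m l) = lastN 1 l := by
  unfold lastN
  rw [List.drop_drop]
  congr 1
  simp; omega

/-- Coprimality makes the multiples of `d` exhaust `ZMod q`. -/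
lemma exists_mul_eq {q d : ℕ} (hq : 2 ≤ q) (hd : Nat.Coprime d q) (a : ZMod q) :
    ∃ j : ℕ, j < q ∧ (j : ZMod q) * (d : ZMod q) = a := by
  have : NeZero q := ⟨by omega⟩
  refine ⟨(a * (d : ZMod q)⁻¹).val, ZMod.val_lt _, ?_⟩
  rw [ZMod.natCast_zmod_val, mul_assoc, mul_comm _ (d : ZMod q), ZMod.coe_mul_inv_eq_one d hd,
    mul_one]

/-- When the greedy rule is stuck, every continuation has been used. -/
lemma nextDigit_none {q n d : ℕ} (hq : 2 ≤ q) (hd : Nat.Coprime d q) {l : List (ZMod q)}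
    (h : nextDigit q 1 n (SprefL q d) l = none) (c : ZMod q) :
    (lastN (n - 1) l ++ [c]) <:+: l := by
  unfold nextDigit at h
  rw [List.find?_eq_none] at h
  obtain ⟨j, hj, hjc⟩ := exists_mul_eq hq hd (c - (lastN 1 l).headI)
  have := h c (by
    simp only [List.mem_map, List.mem_finRange, true_and]
    exact ⟨⟨j, hj⟩, by simp [SprefL, hjc]⟩)
  simpa using this

lemma nextDigit_some {q n d : ℕ} {l : List (ZMod q)} {c : ZMod q}
    (h : nextDigit q 1 n (SprefL q d) l = some c) :
    ¬ (lastN (n - 1) l ++ [c]) <:+: l := by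
  unfold nextDigit at h
  simpa using List.find?_some h

/-- The greedy rule takes the least preferred digit only after all the others are used up. -/
lemma nextDigit_leastPref {q n d : ℕ} (hq : 2 ≤ q) (hd : Nat.Coprime d q) {l : List (ZMod q)}
    (h : nextDigit q 1 n (SprefL q d) l = some ((lastN 1 l).headI - (d : ZMod q)))
    (c : ZMod q) (hc : c ≠ (lastN 1 l).headI - (d : ZMod q)) :
    (lastN (n - 1) l ++ [c]) <:+: l := by
  unfold nextDigit at h
  rw [List.find?_eq_some_iff_getElem] at h
  obtain ⟨-, i, hi, hi1, hi2⟩ := h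
  obtain ⟨j, hj, hjc⟩ := exists_mul_eq hq hd (c - (lastN 1 l).headI)
  have hiq : i < q := by simpa using hi
  have e1 : ((i : ℕ) : ZMod q) * (d : ZMod q) = -(d : ZMod q) := by
    have : (lastN 1 l).headI + ((i : ℕ) : ZMod q) * (d : ZMod q)
        = (lastN 1 l).headI - (d : ZMod q) := by simpa [SprefL] using hi1
    linear_combination this
  -- The index of the least preferred digit is `q - 1`.
  have e2 : q ∣ i + 1 := by
    have h3 : (((i + 1) * d : ℕ) : ZMod q) = 0 := by
      push_cast
      linear_combination e1
    rw [ZMod.natCast_eq_zero_iff] at h3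
    exact hd.symm.dvd_of_dvd_mul_right h3
  have e3 : q ≤ i + 1 := Nat.le_of_dvd (by omega) e2
  have hji : j < i := by
    rcases lt_or_ge j i with h | h
    · exact h
    · exfalso
      have : j = i := by omega
      subst this
      apply hc
      linear_combination e1 - hjc
  have := hi2 j hji
  simpa [SprefL, hjc] using this

/-! ### Invariants of the greedy walk -/

/-- The invariants of the greedy construction, as facts about the word `l` built so far.
`balance` says that the windows of `l` are the edges of a walk from the initial vertex to the
current one; `greedy` says that away from the initial vertex the edge to the least preferred
successor is used last. -/
structure Inv_s5 (q n d : ℕ) (I l : List (ZMod q)) : Prop where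
  len : n ≤ l.length
  nodup : (windows n l).Nodup
  balance : ∀ v : List (ZMod q),
    (windows n l).countP (fun e => e.dropLast = v) + (if lastN (n - 1) l = v then 1 else 0)
      = (windows n l).countP (fun e => e.tail = v) + (if I.dropLast = v then 1 else 0)
  greedy : ∀ v : List (ZMod q), v ≠ I.dropLast → v ++ [leastPref q d v] ∈ windows n l →
    ∀ c, v ++ [c] ∈ windows n l

lemma Inv_s5.initial {q n d : ℕ} (hn : 2 ≤ n) {I : List (ZMod q)} (hI : I.length = n) :
    Inv_s5 q n d I I := by
  have hW : windows n I = [I] := by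
    have h1 : I.take n = I := List.take_of_length_le hI.le
    simp [windows, hI, h1]
  refine ⟨hI.ge, by simp [hW], ?_, ?_⟩
  · intro v
    have : lastN (n - 1) I = I.tail := by
      unfold lastN
      rw [show I.length - (n - 1) = 1 by omega, List.drop_one]
    simp only [hW, this, List.countP_singleton, decide_eq_true_eq]
    omega
  · intro v hv h
    rw [hW, List.mem_singleton] at h
    exact absurd (by rw [← h]; simp) hv

lemma Inv_s5.step {q n d : ℕ} (hq : 2 ≤ q) (hn : 2 ≤ n) (hd : Nat.Coprime d q)
    {I l : List (ZMod q)} (h : Inv_s5 q n d I l) {c : ZMod q}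
    (hc : nextDigit q 1 n (SprefL q d) l = some c) : Inv_s5 q n d I (l ++ [c]) := by
  have hlen := h.len
  have hW := windows_snoc hn l hlen c
  have hcl : (lastN (n - 1) l).length = n - 1 := by simp [lastN]; omega
  have hmem : ∀ c', (lastN (n - 1) l ++ [c']) <:+: l ↔
      lastN (n - 1) l ++ [c'] ∈ windows n l := fun c' =>
    infix_iff_mem_windows (by simp [hcl]; omega)
  refine ⟨by simp; omega, ?_, ?_, ?_⟩
  · rw [hW, ← List.concat_eq_append, List.nodup_concat]
    exact ⟨fun hm => nextDigit_some hc ((hmem c).2 hm), h.nodup⟩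
  · intro v
    have hlast : (lastN (n - 1) l ++ [c]).tail = lastN (n - 1) (l ++ [c]) := by
      unfold lastN
      rw [← List.drop_one, ← List.drop_append_of_le_length (by omega), List.drop_drop]
      congr 1
      simp; omega
    have hb := h.balance v
    rw [hW, List.countP_append, List.countP_append, List.countP_singleton, List.countP_singleton,
      hlast]
    simp only [List.dropLast_concat, decide_eq_true_eq]
    omega
  · intro v hv hm c'
    rw [hW, List.mem_append, List.mem_singleton] at hm ⊢
    rcases hm with hm | hm
    · exact Or.inl (h.greedy v hv hm c')
    · obtain ⟨rfl, hx⟩ := List.append_inj' hm rfl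
      have hx' : (lastN 1 l).headI - (d : ZMod q) = c := by
        have := List.cons.inj hx
        rw [← this.1, leastPref, lastN_one_lastN (by omega) l (by omega)]
      by_cases hcc : c' = c
      · right; rw [hcc]
      · left
        rw [← hmem]
        subst hx'
        exact nextDigit_leastPref hq hd hc c' hcc

/-- There are at most `q ^ n` distinct windows, which bounds the length of the walk. -/
lemma Inv_s5.length_le {q n d : ℕ} (hq : 2 ≤ q) {I l : List (ZMod q)} (h : Inv_s5 q n d I l) :
    l.length + 1 - n ≤ q ^ n := by
  have : NeZero q := ⟨by omega⟩
  have h1 : (windows n l).length = l.length + 1 - n := by simp [windows]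
  rw [← h1, ← List.toFinset_card_of_nodup h.nodup]
  calc (windows n l).toFinset.card
      ≤ ((Finset.univ : Finset (Fin n → ZMod q)).image List.ofFn).card := by
        apply Finset.card_le_card
        intro w hw
        have hw' := length_of_mem_windows (List.mem_toFinset.1 hw)
        subst hw'
        exact Finset.mem_image.2 ⟨w.get, Finset.mem_univ _, List.ofFn_get w⟩
    _ ≤ (Finset.univ : Finset (Fin n → ZMod q)).card := Finset.card_image_le
    _ = q ^ n := by simp [ZMod.card]

/-- With enough fuel, the construction halts because the greedy rule is stuck. -/
lemma greedyAux_spec_s5 {q n d : ℕ} (hq : 2 ≤ q) (hn : 2 ≤ n) (hd : Nat.Coprime d q)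
    {I : List (ZMod q)} (f : ℕ) : ∀ l, Inv_s5 q n d I l → q ^ n + n ≤ l.length + f →
    Inv_s5 q n d I (greedyAux q 1 n (SprefL q d) f l) ∧
      nextDigit q 1 n (SprefL q d) (greedyAux q 1 n (SprefL q d) f l) = none := by
  induction f with
  | zero =>
    intro l h hf
    have := h.length_le hq
    omega
  | succ f ih =>
    intro l h hf
    unfold greedyAux
    cases hc : nextDigit q 1 n (SprefL q d) l with
    | none => exact ⟨h, hc⟩
    | some c => exact ih _ (h.step hq hn hd hc) (by simp; omega)

/-! ### Degree counts -/

/-- Degree count at a vertex: if the edges satisfying `p` are parametrized injectively by digits,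
the number of used ones is at most `q`, with equality exactly when all are used. -/
lemma countP_param {q : ℕ} [NeZero q] {W : List (List (ZMod q))} (hW : W.Nodup)
    (p : List (ZMod q) → Bool) (g : ZMod q → List (ZMod q)) (hg : Function.Injective g)
    (hp : ∀ e ∈ W, p e = true ↔ ∃ c, e = g c) :
    W.countP p ≤ q ∧ (W.countP p = q ↔ ∀ c, g c ∈ W) := by
  have key : W.countP p = (Finset.univ.filter (fun c => g c ∈ W)).card := by
    rw [List.countP_eq_length_filter, ← List.toFinset_card_of_nodup (hW.filter _),
      ← Finset.card_image_of_injective _ hg]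
    congr 1
    ext e
    simp only [List.mem_toFinset, List.mem_filter, Finset.mem_image, Finset.mem_filter,
      Finset.mem_univ, true_and]
    constructor
    · rintro ⟨he, hpe⟩
      obtain ⟨c, rfl⟩ := (hp e he).1 hpe
      exact ⟨c, he, rfl⟩
    · rintro ⟨c, hc, rfl⟩
      exact ⟨hc, (hp _ hc).2 ⟨c, rfl⟩⟩
  have hcard : (Finset.univ : Finset (ZMod q)).card = q := by simp [ZMod.card]
  rw [key]
  constructor
  · exact (Finset.card_le_univ _).trans_eq hcard
  · constructor
    · intro h c
      have := Finset.eq_univ_of_card _ (h.trans hcard.symm)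
      have hc := Finset.mem_univ c
      rw [← this] at hc
      exact (Finset.mem_filter.1 hc).2
    · intro h
      rw [Finset.filter_true_of_mem (fun c _ => h c), hcard]

/-! ### Iterating the least preferred successor -/

/-- The word of length `m` read off the sequence `X` from position `k`. -/
def wordAt {α : Type*} (X : ℕ → α) (m k : ℕ) : List α := (List.range m).map (fun i => X (k + i))

lemma wordAt_snoc {α : Type*} (X : ℕ → α) (m k : ℕ) :
    wordAt X m k ++ [X (k + m)] = X k :: wordAt X m (k + 1) := by
  have h1 : wordAt X m k ++ [X (k + m)] = (List.range (m + 1)).map (fun i => X (k + i)) := by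
    simp [wordAt, List.range_succ]
  rw [h1, List.range_succ_eq_map]
  simp only [wordAt, List.map_cons, List.map_map, add_zero]
  congr 1
  apply List.map_congr_left
  intro i _
  simp only [Function.comp]
  congr 1
  omega

lemma leastPref_wordAt {q d : ℕ} (X : ℕ → ZMod q) (m k : ℕ) :
    leastPref q d (wordAt X (m + 1) k) = X (k + m) - (d : ZMod q) := by
  have : wordAt X (m + 1) k = wordAt X m k ++ [X (k + m)] := by
    simp [wordAt, List.range_succ]
  rw [leastPref, this, lastN]
  simp

/-! ### Closing up the walk -/

/-- For `gcd(d,q) = 1` and an initial word `I` that is an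
alternating string with step `d(q-1)` (i.e. `I_{k+1} = I_k + d(q-1) (mod q)`),
the generalized prefer-same sequence `s_n = (S,I)` is a full de Bruijn
sequence of order `n`: every `n`-word occurs exactly once as a window. -/
theorem sSeq_deBruijn (q n d : ℕ) (hq : 2 ≤ q) (hn : 2 ≤ n)
    (hd : Nat.Coprime d q)
    (I : List (ZMod q)) (hI : I.length = n)
    (hIalt : ∀ k, k + 1 < n →
      I.getD (k + 1) 0 = I.getD k 0 + ((d * (q - 1) : ℕ) : ZMod q)) :
    ∀ w : List (ZMod q), w.length = n →
      windowCount q n w (greedy q 1 n (SprefL q d) I) = 1 := by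
  intro w hw
  have : NeZero q := ⟨by omega⟩
  obtain ⟨hinv, hstuck⟩ := greedyAux_spec_s5 (I := I) hq hn hd (q ^ n) I (Inv_s5.initial hn hI) (by omega)
  rw [windowCount_eq_count]
  change (windows n (greedyAux q 1 n (SprefL q d) (q ^ n) I)).count w = 1
  generalize greedyAux q 1 n (SprefL q d) (q ^ n) I = l at hinv hstuck
  have hlen := hinv.len
  have hnd := hinv.nodup
  have hout : ∀ v : List (ZMod q),
      (windows n l).countP (fun e => e.dropLast = v) ≤ q ∧
      ((windows n l).countP (fun e => e.dropLast = v) = q ↔ ∀ c, v ++ [c] ∈ windows n l) := by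
    intro v
    refine countP_param hnd _ (fun c => v ++ [c]) (fun a b hab => by simpa using hab) ?_
    intro e he
    have hel := length_of_mem_windows he
    simp only [decide_eq_true_eq]
    constructor
    · rintro rfl
      have hne : e ≠ [] := by rintro rfl; simp at hel; omega
      exact ⟨e.getLast hne, (List.dropLast_append_getLast hne).symm⟩
    · rintro ⟨c, rfl⟩
      simp
  have hin : ∀ v : List (ZMod q),
      (windows n l).countP (fun e => e.tail = v) ≤ q ∧
      ((windows n l).countP (fun e => e.tail = v) = q ↔ ∀ c, c :: v ∈ windows n l) := by
    intro v
    refine countP_param hnd _ (fun c => c :: v) (fun a b hab => by simpa using hab) ?_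
    intro e he
    have hel := length_of_mem_windows he
    simp only [decide_eq_true_eq]
    cases e with
    | nil => simp at hel; omega
    | cons a t => simp
  have hcur : ∀ c, lastN (n - 1) l ++ [c] ∈ windows n l := by
    intro c
    rw [← infix_iff_mem_windows (by simp [lastN]; omega)]
    exact nextDigit_none hq hd hstuck c
  -- A stuck walk has exhausted the out-edges of its endpoint, so it has returned to its start.
  have hclosed : I.dropLast = lastN (n - 1) l := by
    by_contra hne
    have h1 := hinv.balance (lastN (n - 1) l)
    rw [if_pos rfl, if_neg hne, ((hout _).2.2 hcur)] at h1
    have h2 := (hin (lastN (n - 1) l)).1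
    omega
  have hfull : ∀ v, (∀ c, v ++ [c] ∈ windows n l) → ∀ c, c :: v ∈ windows n l := by
    intro v hv
    rw [← (hin v).2]
    have h1 := hinv.balance v
    rw [← hclosed, (hout v).2.2 hv] at h1
    omega
  obtain ⟨m, rfl⟩ : ∃ m, n = m + 2 := ⟨n - 2, by omega⟩
  have hne : w ≠ [] := by rintro rfl; simp at hw
  -- The orbit of the vertex `w.dropLast` under passage to the least preferred successor.
  let X : ℕ → ZMod q := fun j =>
    if j ≤ m then w.getD j 0 else w.getD m 0 - ((j - m : ℕ) : ZMod q) * (d : ZMod q)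
  have hX : ∀ k, X (k + m + 1) = X (k + m) - (d : ZMod q) := by
    intro k
    rcases Nat.eq_zero_or_pos k with rfl | hk
    · simp [X]
    · simp only [X]
      rw [if_neg (by omega), if_neg (by omega), show k + m + 1 - m = k + 1 by omega,
        show k + m - m = k by omega]
      push_cast
      ring
  have hX' : ∀ i, X (m + i) = X m - (i : ZMod q) * (d : ZMod q) := by
    intro i
    rcases Nat.eq_zero_or_pos i with rfl | hk
    · simp
    · simp only [X]
      rw [if_neg (by omega), if_pos le_rfl, show m + i - m = i by omega]
  have hback : ∀ k, (∀ c, wordAt X (m + 1) (k + 1) ++ [c] ∈ windows (m + 2) l) →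
      ∀ c, wordAt X (m + 1) k ++ [c] ∈ windows (m + 2) l := by
    intro k hk
    by_cases h0 : wordAt X (m + 1) k = I.dropLast
    · rw [h0, hclosed]; exact hcur
    · apply hinv.greedy _ h0
      rw [leastPref_wordAt, ← hX, add_assoc, wordAt_snoc]
      exact hfull _ hk _
  have hback' : ∀ k, (∀ c, wordAt X (m + 1) k ++ [c] ∈ windows (m + 2) l) →
      ∀ c, wordAt X (m + 1) 0 ++ [c] ∈ windows (m + 2) l := by
    intro k
    induction k with
    | zero => exact id
    | succ k ih => exact fun h => ih (hback k h)
  have hI0 : ∀ i, i < m + 2 → I.getD i 0 = I.getD 0 0 - (i : ZMod q) * (d : ZMod q) := by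
    intro i
    induction i with
    | zero => simp
    | succ i ih =>
      intro hi
      rw [hIalt i hi, ih (by omega)]
      push_cast [Nat.cast_sub (show 1 ≤ q by omega)]
      simp
      ring
  -- After `m` steps the orbit is alternating, and it then runs through all alternating words.
  obtain ⟨j, -, hj⟩ := exists_mul_eq hq hd (X m - I.getD 0 0)
  have hreach : wordAt X (m + 1) (m + j) = I.dropLast := by
    apply List.ext_getElem
    · simp [wordAt, hI]
    · intro i h1 h2
      have hi : i < m + 1 := by simpa [wordAt] using h1
      have := hI0 i (by omega)
      rw [List.getD_eq_getElem _ _ (by omega : i < I.length)] at this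
      simp only [wordAt, List.getElem_map, List.getElem_range, List.getElem_dropLast]
      rw [this, add_assoc, hX']
      push_cast
      linear_combination -hj
  have hstart : wordAt X (m + 1) 0 = w.dropLast := by
    apply List.ext_getElem
    · simp [wordAt, hw]
    · intro i h1 h2
      have hi : i < m + 1 := by simpa [wordAt] using h1
      simp only [wordAt, List.getElem_map, List.getElem_range, List.getElem_dropLast, X]
      rw [if_pos (by omega), List.getD_eq_getElem _ _ (by omega)]
      simp
  have hmem := hback' (m + j) (by rw [hreach, hclosed]; exact hcur) (w.getLast hne)
  rw [hstart, List.dropLast_append_getLast hne] at hmem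
  exact List.count_eq_one_of_mem hnd hmem
end PaperDB
end

section
/- Let q ≥ 2, n ≥ 2, gcd(d,q) = 1, and let o_n = (O,0^n) be the generalized prefer-opposite sequence. For i = 1,…,q−1 set σ_{q−1−i} = i·(q−1)·d (mod q) (that is, σ_{q−1−i} is the i-th iterate of the map a ↦ a + (q−1)d applied to 0); the digits σ_0,…,σ_{q−2} are a rearrangement of 1,…,q−1. Then o_n terminates with the suffix σ_{q−2}^{n−1} σ_{q−3}^{n−1} ⋯ σ_1^{n−1} σ_0^{n−1} 0^{n−1}, i.e., the block of σ_{q−2} repeated n−1 times, followed by σ_{q−3} repeated n−1 times, …, followed by σ_0 repeated n−1 times, followed by 0 repeated n−1 times. -/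
/-!
Write `n = p + 2` and view the greedy sequence `f` as a trail in the de Bruijn graph whose vertices
are the words of length `p + 1` and whose edges are the words of length `p + 2`. From a vertex with
last digit `a` the edges are taken in the order `a + d, a + 2d, …, a - d, a`; no edge is repeated.

*The trail ends at `0^(n-1)`.* In-degrees and out-degrees are all `q`, so a trail can only get stuck
where it began (`Trail.end_zero`). Hence `a^n` with `a ≠ 0` is never used: it is the last choice at
`a^(n-1)`, and after it the trail would be stuck there (`Trail.no_const`).

*All other words are used* (`Trail.allEnding`). Since `0^(n-1)` is exhausted, all edges into it are
used. If an edge that repeats the last digit is used, its source is exhausted, and by balance all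
edges into that source are used; going backwards gives all words ending in `0`. In particular
`a^(n-1) 0` with `a = d` is used; `0 = a - d` is the last choice but one, so by balance all edges
`x a^(n-1)`, `x ≠ a`, are used, and the argument repeats with `a = d, 2d, …`.

*The suffix* (`Trail.chain`). Let `i` be the last visit to `a^(n-1)`, `a ≠ 0`, and let `b = a - d`.
No edge after time `i` leaves a vertex with last digit different from `b` by the digit `b`: the
digit `a` is the next choice at that vertex, so it is taken from there later, and from a vertex with
last digit `a` the trail later reaches `a^(n-1)` (`Trail.reach`). This forces the digits
after `a^(n-1)` to be `b^(n-1)` and this to be the last visit to `b^(n-1)`. Starting from `a = -d`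
and ending with `b = 0`, whose last visit is the end of the trail, gives the claimed suffix.
-/

namespace PaperDB

/-- The generalized prefer-opposite preference function `O^{(q,d)}`, of span 1:
`O_j(a) = a + j·d (mod q)` for `j = 1,…,q`; the `Fin q`-index `j` denotes column `j+1`. -/
def OprefL (q d : ℕ) : List (ZMod q) → Fin q → ZMod q :=
  fun x j => x.headI + (((j : ℕ) + 1 : ℕ) : ZMod q) * (d : ZMod q)

/-- The generalized prefer-opposite sequence `o_n = (O, 0^n)`. -/
def oSeq (q n d : ℕ) : List (ZMod q) :=
  greedy q 1 n (OprefL q d) (List.replicate n 0)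


/-! ### Trails and words -/

/-- `f` restricted to `[0, M + p]` is a (possibly unfinished) run of the greedy prefer-opposite
construction for words of length `n = p + 2`. The window starting at `i < M` is the edge `i`, from
the vertex `f i, …, f (i + p)` to the vertex `f (i + 1), …, f (i + p + 1)`; the trail is currently
at the vertex starting at `M`. The edge `0` is the initial word `0^n`, so it is exempt from the
greedy rule. -/
structure Trail (q d p M : ℕ) (f : ℕ → ZMod q) : Prop where
  pos : 1 ≤ M
  begin_zero : ∀ k ≤ p + 1, f k = 0
  inj : ∀ i j, i < M → j < M → (∀ k ≤ p + 1, f (i + k) = f (j + k)) → i = j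
  greedy : ∀ i, 1 ≤ i → i < M → ∀ r' r : ℕ, 1 ≤ r' → r' < r → r ≤ q →
    f (i + p + 1) = f (i + p) + r * d →
    ∃ j < i, (∀ k ≤ p, f (j + k) = f (i + k)) ∧ f (j + p + 1) = f (i + p) + r' * d

/-- The word `W 0, …, W (p + 1)` is an edge of the trail. Words are encoded as functions on `ℕ` of
which only the values up to `p + 1` (for edges) or `p` (for vertices) matter. -/
def Used (q p M : ℕ) (f W : ℕ → ZMod q) : Prop := ∃ i < M, ∀ k ≤ p + 1, f (i + k) = W k

/-- The word of length `p + 2` made of the first `p + 1` digits of `v`, followed by `c`. -/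
def snoc {q : ℕ} (p : ℕ) (v : ℕ → ZMod q) (c : ZMod q) : ℕ → ZMod q :=
  fun k => if k ≤ p then v k else c

theorem snoc_of_le {q p k : ℕ} {v : ℕ → ZMod q} {c : ZMod q} (hk : k ≤ p) :
    snoc p v c k = v k := if_pos hk

theorem snoc_last {q p : ℕ} {v : ℕ → ZMod q} {c : ZMod q} : snoc p v c (p + 1) = c :=
  if_neg (by omega)

/-- All edges leaving the final vertex of the trail are used. -/
def Stuck (q p M : ℕ) (f : ℕ → ZMod q) : Prop :=
  ∀ W : ℕ → ZMod q, (∀ k ≤ p, f (M + k) = W k) → Used q p M f W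

/-- All words ending in `a` are used, except possibly the constant word. -/
def AllEnding (q p M : ℕ) (f : ℕ → ZMod q) (a : ZMod q) : Prop :=
  ∀ W : ℕ → ZMod q, W (p + 1) = a → (∃ k ≤ p, W k ≠ a) → Used q p M f W

/-- Every difference of digits has a rank in the preference order; the difference `0` has
rank `q`. -/
theorem exists_rank {q d : ℕ} (hq : 2 ≤ q) (hd : Nat.Coprime d q) (x : ZMod q) :
    ∃ r : ℕ, 1 ≤ r ∧ r ≤ q ∧ x = r * d := by
  have : NeZero q := ⟨by omega⟩
  have hu : (d : ZMod q)⁻¹ * d = 1 := ZMod.inv_mul_of_unit _ ((ZMod.isUnit_iff_coprime d q).2 hd)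
  have hx : x = ((x * (d : ZMod q)⁻¹).val : ZMod q) * d := by
    rw [ZMod.natCast_zmod_val, mul_assoc, hu, mul_one]
  rcases Nat.eq_zero_or_pos (x * (d : ZMod q)⁻¹).val with h | h
  · refine ⟨q, by omega, le_rfl, ?_⟩
    rw [h] at hx
    simpa using hx
  · exact ⟨_, h, (ZMod.val_lt _).le, hx⟩

theorem mul_d_inj {q d : ℕ} (hd : Nat.Coprime d q) {i j : ℕ}
    (hi : i < q) (hj : j < q) (h : (i : ZMod q) * d = j * d) : i = j := by
  have hu := (ZMod.isUnit_iff_coprime d q).2 hd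
  have h2 := hu.mul_right_cancel h
  rw [ZMod.natCast_eq_natCast_iff'] at h2
  rwa [Nat.mod_eq_of_lt hi, Nat.mod_eq_of_lt hj] at h2

theorem d_ne_zero {q d : ℕ} (hq : 2 ≤ q) (hd : Nat.Coprime d q) : (d : ZMod q) ≠ 0 := by
  intro h
  have := mul_d_inj hd (i := 1) (j := 0) (by omega) (by omega) (by simp [h])
  omega

theorem Used.of_snoc {q p M : ℕ} {f v : ℕ → ZMod q} {c : ZMod q} (h : Used q p M f (snoc p v c)) :
    ∃ i < M, (∀ k ≤ p, f (i + k) = v k) ∧ f (i + p + 1) = c := by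
  obtain ⟨i, hi, hW⟩ := h
  refine ⟨i, hi, fun k hk => (hW k (by omega)).trans (snoc_of_le hk), ?_⟩
  exact (hW (p + 1) le_rfl).trans snoc_last

open Classical in
/-- Departures from `v` plus one if the trail ends at `v` equal arrivals at `v` plus one if it
starts at `v`. -/
theorem count_balance {q : ℕ} (p M : ℕ) (f v : ℕ → ZMod q) :
    ((Finset.range M).filter (fun i => ∀ k ≤ p, f (i + k) = v k)).card
        + (if ∀ k ≤ p, f (M + k) = v k then 1 else 0)
      = ((Finset.range M).filter (fun i => ∀ k ≤ p, f (i + 1 + k) = v k)).card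
        + (if ∀ k ≤ p, f k = v k then 1 else 0) := by
  have h1 := Finset.sum_range_succ (fun i => if ∀ k ≤ p, f (i + k) = v k then 1 else 0) M
  have h2 := Finset.sum_range_succ' (fun i => if ∀ k ≤ p, f (i + k) = v k then 1 else 0) M
  rw [Finset.card_filter, Finset.card_filter, ← h1, h2]
  simp

section Trail

variable {q d p M : ℕ} {f : ℕ → ZMod q}

/-! ### Consequences of the greedy rule -/

/-- Repeating the last digit is the last choice: all other digits were taken before. -/
theorem Trail.last_pref (T : Trail q d p M f) (hq : 2 ≤ q) (hd : Nat.Coprime d q) {i : ℕ}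
    (h1 : 1 ≤ i) (hM : i < M) (h : f (i + p + 1) = f (i + p)) (c : ZMod q) (hc : c ≠ f (i + p)) :
    ∃ j < i, (∀ k ≤ p, f (j + k) = f (i + k)) ∧ f (j + p + 1) = c := by
  obtain ⟨r, hr1, hrq, hr⟩ := exists_rank hq hd (c - f (i + p))
  have hne : r ≠ q := by
    rintro rfl
    apply hc
    simpa [sub_eq_zero] using hr
  obtain ⟨j, hj, h2, h3⟩ := T.greedy i h1 hM r q hr1 (by omega) le_rfl (by simp [h])
  exact ⟨j, hj, h2, by rw [h3, ← hr]; ring⟩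

/-- Subtracting `d` is the last choice but one. -/
theorem Trail.penultimate_pref (T : Trail q d p M f) (hq : 2 ≤ q) (hd : Nat.Coprime d q) {i : ℕ}
    (h1 : 1 ≤ i) (hM : i < M) (h : f (i + p + 1) + d = f (i + p)) (c : ZMod q)
    (hc : c ≠ f (i + p)) :
    ∃ j ≤ i, (∀ k ≤ p, f (j + k) = f (i + k)) ∧ f (j + p + 1) = c := by
  obtain ⟨r, hr1, hrq, hr⟩ := exists_rank hq hd (c - f (i + p))
  have hne : r ≠ q := by
    rintro rfl
    apply hc
    simpa [sub_eq_zero] using hr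
  have hq1 : f (i + p + 1) = f (i + p) + (q - 1 : ℕ) * d := by
    rw [Nat.cast_sub (by omega), ← h]
    simp
  rcases Nat.lt_or_ge r (q - 1) with hlt | hge
  · obtain ⟨j, hj, h2, h3⟩ := T.greedy i h1 hM r (q - 1) hr1 hlt (by omega) hq1
    exact ⟨j, hj.le, h2, by rw [h3, ← hr]; ring⟩
  · refine ⟨i, le_rfl, fun _ _ => rfl, ?_⟩
    have : r = q - 1 := by omega
    rw [hq1, ← this, ← hr]; ring

/-- Unless `b` is the last choice, `b + d` is the choice following `b`. -/
theorem Trail.prev_pref (T : Trail q d p M f) (hq : 2 ≤ q) (hd : Nat.Coprime d q) {i : ℕ}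
    (h1 : 1 ≤ i) (hM : i < M) (b : ZMod q) (h : f (i + p + 1) = b + d) (hb : b ≠ f (i + p)) :
    ∃ j < i, (∀ k ≤ p, f (j + k) = f (i + k)) ∧ f (j + p + 1) = b := by
  obtain ⟨r, hr1, hrq, hr⟩ := exists_rank hq hd (b - f (i + p))
  have hne : r ≠ q := by
    rintro rfl
    apply hb
    simpa [sub_eq_zero] using hr
  obtain ⟨j, hj, h2, h3⟩ := T.greedy i h1 hM r (r + 1) hr1 (by omega) (by omega)
    (by rw [h]; push_cast; linear_combination hr)
  exact ⟨j, hj, h2, by rw [h3, ← hr]; ring⟩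

theorem Trail.edge_inj (T : Trail q d p M f) {i j : ℕ} (hi : i < M) (hj : j < M)
    (h : ∀ k ≤ p, f (i + k) = f (j + k)) (h' : f (i + p + 1) = f (j + p + 1)) : i = j := by
  refine T.inj i j hi hj fun k hk => ?_
  rcases Nat.lt_or_ge k (p + 1) with hlt | hge
  · exact h k (by omega)
  · obtain rfl : k = p + 1 := by omega
    exact h'

/-! ### Balance of in- and out-edges -/

open Classical in
/-- Edges entering a given vertex are determined by their first digit. -/
theorem Trail.injOn_in (T : Trail q d p M f) (v : ℕ → ZMod q) :
    Set.InjOn f ((Finset.range M).filter (fun i => ∀ k ≤ p, f (i + 1 + k) = v k) : Finset ℕ) := by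
  intro i hi j hj hij
  simp only [Finset.coe_filter, Finset.mem_range, Set.mem_ofPred_eq] at hi hj
  refine T.inj i j hi.1 hj.1 fun k hk => ?_
  rcases k with _ | k
  · exact hij
  · rw [show i + (k + 1) = i + 1 + k by omega, show j + (k + 1) = j + 1 + k by omega,
      hi.2 k (by omega), hj.2 k (by omega)]

/-- If all digits of `C` were taken at `v`, all edges entering `v` start with digits of `D`, and
`D` is not larger than `C`, then all the words `x v` with `x ∈ D` are used. -/
theorem Trail.balance (T : Trail q d p M f) (v : ℕ → ZMod q) (C D : Finset (ZMod q))
    (hv : (∀ k ≤ p, f (M + k) = v k) ∨ ∃ k ≤ p, v k ≠ 0)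
    (hC : ∀ c ∈ C, ∃ i < M, (∀ k ≤ p, f (i + k) = v k) ∧ f (i + p + 1) = c)
    (hD : ∀ i < M, (∀ k ≤ p, f (i + 1 + k) = v k) → f i ∈ D)
    (hcard : D.card ≤ C.card) (W : ℕ → ZMod q) (hW : ∀ k ≤ p, W (k + 1) = v k)
    (hW0 : W 0 ∈ D) : Used q p M f W := by
  classical
  have hb := count_balance p M f v
  set A := (Finset.range M).filter (fun i => ∀ k ≤ p, f (i + k) = v k) with hA
  set B := (Finset.range M).filter (fun i => ∀ k ≤ p, f (i + 1 + k) = v k) with hB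
  have hCA : C.card ≤ A.card := by
    refine le_trans (Finset.card_le_card ?_) (Finset.card_image_le (f := fun i => f (i + p + 1)))
    intro c hc
    obtain ⟨i, hi, h1, h2⟩ := hC c hc
    exact Finset.mem_image.2 ⟨i, by simp [hA, hi]; exact h1, h2⟩
  have hAB : A.card ≤ B.card := by
    rcases hv with hv | ⟨k, hk, hne⟩
    · rw [if_pos hv] at hb
      split_ifs at hb <;> omega
    · rw [if_neg (c := ∀ k ≤ p, f k = v k)] at hb
      · omega
      · intro h
        exact hne (by rw [← h k hk, T.begin_zero k (by omega)])
  have hinj : Set.InjOn f B := T.injOn_in _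
  have himg : B.image f = D := by
    apply Finset.eq_of_subset_of_card_le
    · intro x hx
      obtain ⟨i, hi, rfl⟩ := Finset.mem_image.1 hx
      simp only [hB, Finset.mem_filter, Finset.mem_range] at hi
      exact hD i hi.1 hi.2
    · rw [Finset.card_image_of_injOn hinj]; omega
  rw [← himg] at hW0
  obtain ⟨i, hi, hi0⟩ := Finset.mem_image.1 hW0
  simp only [hB, Finset.mem_filter, Finset.mem_range] at hi
  refine ⟨i, hi.1, fun k hk => ?_⟩
  rcases k with _ | k
  · exact hi0
  · rw [hW k (by omega), ← hi.2 k (by omega)]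
    congr 1; omega

/-- A stuck trail is back at its first vertex `0^(n-1)`: elsewhere there would be one more arrival
than the `q` departures, but only `q` edges enter a vertex. -/
theorem Trail.end_zero (T : Trail q d p M f) (hS : Stuck q p M f) (hq : 2 ≤ q) :
    ∀ k ≤ p, f (M + k) = 0 := by
  classical
  have : NeZero q := ⟨by omega⟩
  by_contra hcon
  have hb := count_balance p M f (fun k => f (M + k))
  rw [if_pos (fun _ _ => rfl), if_neg] at hb
  swap
  · intro h
    exact hcon fun k hk => by rw [← h k hk, T.begin_zero k (by omega)]
  set A := (Finset.range M).filter (fun i => ∀ k ≤ p, f (i + k) = f (M + k)) with hA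
  set B := (Finset.range M).filter (fun i => ∀ k ≤ p, f (i + 1 + k) = f (M + k)) with hB
  have hCA : (Finset.univ : Finset (ZMod q)).card ≤ A.card := by
    refine le_trans (Finset.card_le_card ?_) (Finset.card_image_le (f := fun i => f (i + p + 1)))
    intro c _
    obtain ⟨i, hi, h1, h2⟩ := (hS (snoc p (fun k => f (M + k)) c)
      (fun k hk => by rw [snoc_of_le hk])).of_snoc
    exact Finset.mem_image.2 ⟨i, by simp [hA, hi]; exact h1, h2⟩
  have hinj : Set.InjOn f B := T.injOn_in _
  have hB' : B.card ≤ (Finset.univ : Finset (ZMod q)).card := by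
    rw [← Finset.card_image_of_injOn hinj]
    exact Finset.card_le_card (Finset.subset_univ _)
  omega

/-- A constant word never occurs after time `0`: it would be the last choice at its vertex, to
which it leads back. -/
theorem Trail.no_const (T : Trail q d p M f) (hS : Stuck q p M f) (hq : 2 ≤ q)
    (hd : Nat.Coprime d q) {a : ZMod q} {i : ℕ} (hi : i < M) (h1 : 1 ≤ i)
    (h : ∀ k ≤ p + 1, f (i + k) = a) : False := by
  by_cases ha : a = 0
  · subst ha
    have := T.inj i 0 hi T.pos (fun k hk => by rw [h k hk, zero_add, T.begin_zero k hk])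
    omega
  have hV : ∀ k ≤ p, f (i + 1 + k) = a := fun k hk => by
    rw [← h (k + 1) (by omega)]; congr 1; omega
  have hMi : i + 1 ≠ M := by
    intro hM
    have := T.end_zero hS hq 0 (by omega)
    rw [← hM, hV 0 (by omega)] at this
    exact ha this
  have hM : i + 1 < M := by omega
  by_cases hc : f (i + 1 + p + 1) = a
  · have := T.edge_inj hM hi (fun k hk => by rw [hV k hk, h k (by omega)])
      (by rw [hc]; exact (h (p + 1) le_rfl).symm)
    omega
  · have hp := h p (by omega)
    obtain ⟨j, hj, h2, h3⟩ := T.last_pref hq hd h1 hi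
      (by rw [hp]; exact h (p + 1) le_rfl) (f (i + 1 + p + 1)) (by rwa [hp])
    have := T.edge_inj (i := j) (by omega) hM
      (fun k hk => by rw [h2 k hk, hV k hk, h k (by omega)]) h3
    omega

/-! ### All words but the nonzero constant ones are used -/

/-- Backward propagation: if all edges other than the loop into `a^(n-1)` are used, so are all
nonconstant words ending in `a`. -/
theorem Trail.allEnding_of_in (T : Trail q d p M f) (hq : 2 ≤ q)
    (hd : Nat.Coprime d q) (a : ZMod q)
    (h0 : ∀ W : ℕ → ZMod q, (∀ k ≤ p, W (k + 1) = a) → W 0 ≠ a → Used q p M f W) :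
    AllEnding q p M f a := by
  have : NeZero q := ⟨by omega⟩
  -- Induction on the position `e` of the last digit of `W` different from `a`.
  have key : ∀ e ≤ p, ∀ W : ℕ → ZMod q, W e ≠ a → (∀ k, e < k → k ≤ p + 1 → W k = a) →
      Used q p M f W := by
    intro e
    induction e with
    | zero => exact fun _ W h1 h2 => h0 W (fun k hk => h2 _ (by omega) (by omega)) h1
    | succ e ih =>
      intro he W h1 h2
      -- The word obtained by dropping the first digit of `W` and appending `a` repeats its last
      -- digit, so the vertex `W 1, …, W (p + 1)` is exhausted.
      obtain ⟨i, hi, hV, hl⟩ := (ih (by omega) (snoc p (fun k => W (k + 1)) a)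
        (by rw [snoc_of_le (by omega)]; exact h1)
        (fun k hk hk' => by
          unfold snoc
          split_ifs with h
          · exact h2 _ (by omega) (by omega)
          · rfl)).of_snoc
      have hp : f (i + p) = a := by rw [hV p le_rfl, h2 _ (by omega) le_rfl]
      have he' : f (i + e) ≠ a := by rw [hV e (by omega)]; exact h1
      have hi1 : 1 ≤ i := by
        by_contra hi0
        obtain rfl : i = 0 := by omega
        apply he'
        rw [← hp, zero_add, zero_add, T.begin_zero _ (by omega), T.begin_zero _ (by omega)]
      refine T.balance (fun k => W (k + 1)) Finset.univ Finset.univ ?_ ?_ (by simp) le_rfl W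
        (fun _ _ => rfl) (by simp)
      · right
        by_cases ha : a = 0
        · exact ⟨e, by omega, by rw [← ha]; exact h1⟩
        · exact ⟨p, le_rfl, by rw [h2 _ (by omega) le_rfl]; exact ha⟩
      · intro c _
        by_cases hc : c = a
        · exact ⟨i, hi, hV, by rw [hl, hc]⟩
        · obtain ⟨j, hj, h3, h4⟩ := T.last_pref hq hd hi1 hi (by rw [hl, hp]) c (by rwa [hp])
          exact ⟨j, by omega, fun k hk => by rw [h3 k hk, hV k hk], h4⟩
  intro W hWa hex
  classical
  let e := Nat.findGreatest (fun k => W k ≠ a) p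
  obtain ⟨k, hk, hne⟩ := hex
  refine key e (Nat.findGreatest_le p) W (Nat.findGreatest_spec (P := fun k => W k ≠ a) hk hne) ?_
  intro k' h1 h2
  rcases Nat.lt_or_ge k' (p + 1) with hlt | hge
  · have := Nat.findGreatest_is_greatest (P := fun k => W k ≠ a) h1 (by omega)
    simpa using this
  · obtain rfl : k' = p + 1 := by omega
    exact hWa

theorem Trail.allEnding (T : Trail q d p M f) (hS : Stuck q p M f) (hq : 2 ≤ q)
    (hd : Nat.Coprime d q) (a : ZMod q) : AllEnding q p M f a := by
  have : NeZero q := ⟨by omega⟩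
  have hz : AllEnding q p M f 0 := by
    refine T.allEnding_of_in hq hd 0 fun W hW _ => ?_
    have hE := T.end_zero hS hq
    refine T.balance (fun _ => 0) Finset.univ Finset.univ (Or.inl hE) ?_ (by simp) le_rfl W hW
      (by simp)
    intro c _
    exact (hS (snoc p (fun _ => 0) c) (fun k hk => by rw [snoc_of_le hk, hE k hk])).of_snoc
  have hr : ∀ r : ℕ, AllEnding q p M f (r * d) := by
    intro r
    induction r with
    | zero => simpa using hz
    | succ r ih =>
      set a := (r : ZMod q) * d with ha
      have hs : ((r + 1 : ℕ) : ZMod q) * d = a + d := by rw [ha]; push_cast; ring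
      rw [hs]
      by_cases h0 : a + d = 0
      · rw [h0]; exact hz
      have hne : a + d ≠ a := by simpa using d_ne_zero hq hd
      -- At the vertex `(a + d)^(n-1)` the digit `a` is the last choice but one.
      obtain ⟨i, hi, hV, hl⟩ := (ih (snoc p (fun _ => a + d) a) snoc_last
        ⟨0, by omega, by rwa [snoc_of_le (by omega)]⟩).of_snoc
      have hi1 : 1 ≤ i := by
        by_contra hi0
        obtain rfl : i = 0 := by omega
        apply h0
        rw [← hV 0 (by omega), T.begin_zero _ (by omega)]
      refine T.allEnding_of_in hq hd _ fun W hW hW0 => ?_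
      refine T.balance (fun _ => a + d) (Finset.univ.erase (a + d)) (Finset.univ.erase (a + d))
        (Or.inr ⟨0, by omega, h0⟩) ?_ ?_ le_rfl W hW (by simpa using hW0)
      · intro c hc
        obtain ⟨j, hj, h1, h2⟩ := T.penultimate_pref hq hd hi1 hi (by rw [hl, hV p le_rfl]) c
          (by rw [hV p le_rfl]; simpa using hc)
        exact ⟨j, by omega, fun k hk => by rw [h1 k hk, hV k hk], h2⟩
      · intro j hj hVj
        simp only [Finset.mem_erase, Finset.mem_univ, and_true]
        intro hfj
        refine T.no_const hS hq hd (a := a + d) hj ?_ ?_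
        · by_contra hj0
          obtain rfl : j = 0 := by omega
          exact h0 (by rw [← hfj, T.begin_zero 0 (by omega)])
        · intro k hk
          rcases k with _ | k
          · exact hfj
          · rw [← hVj k (by omega)]; congr 1; omega
  obtain ⟨r, -, -, rfl⟩ := exists_rank hq hd a
  exact hr r

/-! ### The last visits to the constant vertices -/

/-- If the trail is at a vertex ending in `a`, it is at `a^(n-1)` then or later: a nonconstant
vertex ending in `a` still has to be left by its last choice `a`. -/
theorem Trail.reach (T : Trail q d p M f) (hS : Stuck q p M f) (hq : 2 ≤ q)
    (hd : Nat.Coprime d q) (a : ZMod q) : ∀ e ≤ p, ∀ i ≤ M,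
    (∀ k, e ≤ k → k ≤ p → f (i + k) = a) → ∃ j ≤ M, i ≤ j ∧ ∀ k ≤ p, f (j + k) = a := by
  intro e
  induction e with
  | zero => exact fun _ i hi h => ⟨i, hi, le_rfl, fun k hk => h k (by omega) hk⟩
  | succ e ih =>
    intro he i hi h
    by_cases hae : f (i + e) = a
    · refine ih (by omega) i hi fun k hk hk' => ?_
      rcases Nat.lt_or_ge e k with hlt | hge
      · exact h k hlt hk'
      · obtain rfl : k = e := by omega
        exact hae
    have hp := h p he le_rfl
    have hiM : i ≠ M := by
      rintro rfl
      apply hae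
      rw [← hp, T.end_zero hS hq _ (by omega), T.end_zero hS hq _ le_rfl]
    obtain ⟨j, hj, hV, hl⟩ := (T.allEnding hS hq hd a (snoc p (fun k => f (i + k)) a)
      snoc_last ⟨e, by omega, by rwa [snoc_of_le (by omega)]⟩).of_snoc
    have hij : i ≤ j := by
      by_cases hc : f (i + p + 1) = a
      · exact (T.edge_inj (by omega) hj (fun k hk => (hV k hk).symm) (by rw [hc, hl])).le
      have hj1 : 1 ≤ j := by
        by_contra hj0
        obtain rfl : j = 0 := by omega
        apply hae
        rw [← hp, ← hV e (by omega), ← hV p le_rfl, T.begin_zero _ (by omega), T.begin_zero _ (by omega)]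
      obtain ⟨j', hj', h1, h2⟩ := T.last_pref hq hd hj1 hj (by rw [hl, hV p le_rfl, hp])
        (f (i + p + 1)) (by rw [hV p le_rfl, hp]; exact hc)
      have := T.edge_inj (i := j') (j := i) (by omega) (by omega)
        (fun k hk => by rw [h1 k hk, hV k hk]) h2
      omega
    obtain ⟨t, ht, h1, h2⟩ := ih (by omega) (j + 1) hj (fun k hk hk' => by
      rcases Nat.lt_or_ge k p with hlt | hge
      · rw [← h (k + 1) (by omega) (by omega), ← hV (k + 1) (by omega)]; congr 1; omega
      · obtain rfl : k = p := by omega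
        rw [← hl]; congr 1; omega)
    exact ⟨t, ht, by omega, h2⟩

/-- If the digit `b` is taken at a vertex other than `a^(n-1)`, `a = b + d ≠ 0`, whose last digit is
not `b`, then the next choice `a` is taken there later, after which `a^(n-1)` is visited. -/
theorem Trail.later_visit (T : Trail q d p M f) (hS : Stuck q p M f) (hq : 2 ≤ q)
    (hd : Nat.Coprime d q) {a b : ZMod q} (hab : b + d = a) (ha : a ≠ 0) {s : ℕ} (hs : s < M)
    (h1 : f (s + p + 1) = b) (h2 : f (s + p) ≠ b) (h3 : ∃ k ≤ p, f (s + k) ≠ a) :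
    ∃ j ≤ M, s < j ∧ ∀ k ≤ p, f (j + k) = a := by
  obtain ⟨k₀, hk₀, hne⟩ := h3
  obtain ⟨j, hj, hV, hl⟩ := (T.allEnding hS hq hd a (snoc p (fun k => f (s + k)) a)
    snoc_last ⟨k₀, hk₀, by rwa [snoc_of_le hk₀]⟩).of_snoc
  have hj1 : 1 ≤ j := by
    by_contra hj0
    obtain rfl : j = 0 := by omega
    apply ha
    rw [← hl, T.begin_zero _ (by omega)]
  obtain ⟨j', hj', h4, h5⟩ := T.prev_pref hq hd hj1 hj b (by rw [hl, hab])
    (by rw [hV p le_rfl]; exact h2.symm)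
  have := T.edge_inj (i := j') (j := s) (by omega) hs
    (fun k hk => by rw [h4 k hk, hV k hk]) (by rw [h5, h1])
  obtain ⟨t, ht, h6, h7⟩ := T.reach hS hq hd a p le_rfl (j + 1) hj (fun k hk hk' => by
    obtain rfl : k = p := by omega
    rw [← hl]; congr 1; omega)
  exact ⟨t, ht, by omega, h7⟩

/-- The trail visits `a^(n-1)` at time `i` for the last time. -/
def LastVisit (q p M : ℕ) (f : ℕ → ZMod q) (i : ℕ) (a : ZMod q) : Prop :=
  i ≤ M ∧ (∀ k ≤ p, f (i + k) = a) ∧ ∀ j ≤ M, i < j → ¬ ∀ k ≤ p, f (j + k) = a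

/-- The last visit to `a^(n-1)`, `a ≠ 0`, is followed by the digits `(a - d)^(n-1)`, and this is
the last visit to `(a - d)^(n-1)`. -/
theorem Trail.chain (T : Trail q d p M f) (hS : Stuck q p M f) (hq : 2 ≤ q)
    (hd : Nat.Coprime d q) {a b : ZMod q} (hab : b + d = a) (ha : a ≠ 0) {i : ℕ}
    (hL : LastVisit q p M f i a) : LastVisit q p M f (i + p + 1) b := by
  obtain ⟨hiM, hVa, hlast⟩ := hL
  have hba : a ≠ b := by
    rw [← hab]; simpa using d_ne_zero hq hd
  have hi1 : 1 ≤ i := by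
    by_contra hi0
    obtain rfl : i = 0 := by omega
    apply ha
    rw [← hVa 0 (by omega), T.begin_zero _ (by omega)]
  have hno : ∀ s, i < s → s < M → f (s + p) ≠ b → f (s + p + 1) ≠ b := by
    intro s hs hsM h1 h2
    have h3 : ∃ k ≤ p, f (s + k) ≠ a := by
      have := hlast s hsM.le hs
      push Not at this
      exact this
    obtain ⟨j, hj, h4, h5⟩ := T.later_visit hS hq hd hab ha hsM h2 h1 h3
    exact hlast j hj (by omega) h5
  have key : ∀ j ≤ p + 1, i + j ≤ M ∧ ∀ k < j, f (i + p + 1 + k) = b := by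
    intro j
    induction j with
    | zero => exact fun _ => ⟨hiM, fun k hk => by omega⟩
    | succ j ih =>
      intro hj
      obtain ⟨h1, h2⟩ := ih (by omega)
      have hfa : ∀ k, j + k ≤ p → f (i + j + k) = a := fun k hk => by
        rw [← hVa (j + k) hk]; congr 1; omega
      have hfb : ∀ k, p < j + k → k ≤ p → f (i + j + k) = b := fun k hk hk' => by
        rw [← h2 (j + k - p - 1) (by omega)]; congr 1; omega
      have hjM : i + j ≠ M := by
        intro h
        apply ha
        rw [← hfa 0 (by omega), h, T.end_zero hS hq 0 (by omega)]
      have hlt : i + j < M := by omega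
      have hc : f (i + j + p + 1) = b := by
        by_contra hc
        obtain ⟨s, hs, hV, hl⟩ := (T.allEnding hS hq hd b
          (snoc p (fun k => f (i + j + k)) b) snoc_last
          ⟨0, by omega, by rw [snoc_of_le (by omega), hfa 0 (by omega)]; exact hba⟩).of_snoc
        have hs1 : 1 ≤ s := by
          by_contra hs0
          obtain rfl : s = 0 := by omega
          apply ha
          rw [← hfa 0 (by omega), ← hV 0 (by omega), T.begin_zero _ (by omega)]
        -- `b` is the least preferred digit still available at the vertex `a^(n-1-j) b^j` of time
        -- `i + j`, so it is taken after the digit chosen at that time.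
        have hgt : i + j < s := by
          have hex : ∃ t ≤ s, (∀ k ≤ p, f (t + k) = f (s + k)) ∧
              f (t + p + 1) = f (i + j + p + 1) := by
            rcases Nat.eq_zero_or_pos j with rfl | hjpos
            · have hsp : f (s + p) = a := by rw [hV p le_rfl, hfa p (by omega)]
              refine T.penultimate_pref hq hd hs1 hs (by rw [hl, hsp, hab]) _ ?_
              rw [hsp]
              intro hca
              refine T.no_const hS hq hd (a := a) hlt (by omega) fun k hk => ?_
              rcases Nat.lt_or_ge k (p + 1) with hlt | hge
              · exact hfa k (by omega)
              · obtain rfl : k = p + 1 := by omega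
                exact hca
            · have hsp : f (s + p) = b := by rw [hV p le_rfl, hfb p (by omega) le_rfl]
              obtain ⟨t, ht, h⟩ := T.last_pref hq hd hs1 hs (by rw [hl, hsp])
                (f (i + j + p + 1)) (by rwa [hsp])
              exact ⟨t, ht.le, h⟩
          obtain ⟨t, ht, h3, h4⟩ := hex
          have hte := T.edge_inj (i := t) (by omega) hlt (fun k hk => by rw [h3 k hk, hV k hk]) h4
          have : s ≠ i + j := by
            rintro rfl
            exact hc hl
          omega
        -- Going back `j` steps from time `s`, a vertex ending in `a` is left by `b` after time `i`.
        refine hno (s - j) (by omega) (by omega) ?_ ?_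
        · rw [show s - j + p = s + (p - j) by omega, hV _ (by omega), hfa _ (by omega)]
          exact hba
        · rcases Nat.eq_zero_or_pos j with rfl | hjpos
          · exact hl
          · rw [show s - j + p + 1 = s + (p + 1 - j) by omega, hV _ (by omega),
              hfb _ (by omega) (by omega)]
      refine ⟨by omega, fun k hk => ?_⟩
      rcases Nat.lt_or_ge k j with hkj | hkj
      · exact h2 k hkj
      · obtain rfl : k = j := by omega
        rw [← hc]; congr 1; omega
  obtain ⟨hM, hb⟩ := key (p + 1) le_rfl
  refine ⟨by omega, fun k hk => hb k (by omega), fun u hu hiu hub => ?_⟩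
  have hcb : f (u - 1) ≠ b := by
    intro h
    refine T.no_const hS hq hd (a := b) (i := u - 1) (by omega) (by omega) fun k hk => ?_
    rcases k with _ | k
    · exact h
    · rw [← hub k (by omega)]; congr 1; omega
  refine hno (u - 1 - p) (by omega) (by omega) ?_ ?_
  · rwa [show u - 1 - p + p = u - 1 by omega]
  · rw [← hub 0 (by omega)]; congr 1; omega

/-- A stuck trail ends with the blocks `(-d)^(n-1) (-2d)^(n-1) ⋯ (-qd)^(n-1)`. -/
theorem Trail.blocks (T : Trail q d p M f) (hS : Stuck q p M f) (hq : 2 ≤ q)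
    (hd : Nat.Coprime d q) : ∃ t, t + q * (p + 1) = M + p + 1 ∧
      ∀ i < q, ∀ k ≤ p, f (t + i * (p + 1) + k) = -(((i + 1 : ℕ) : ZMod q) * d) := by
  classical
  have hdn := d_ne_zero hq hd
  obtain ⟨i₀, hi₀, hV, -⟩ := (T.allEnding hS hq hd 0 (snoc p (fun _ => -(d : ZMod q)) 0)
    snoc_last ⟨0, by omega, by rw [snoc_of_le (by omega)]; simpa using hdn⟩).of_snoc
  let P : ℕ → Prop := fun i => ∀ k ≤ p, f (i + k) = -(d : ZMod q)
  let t := Nat.findGreatest P M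
  have ht : LastVisit q p M f t (-d) :=
    ⟨Nat.findGreatest_le M, Nat.findGreatest_spec (P := P) hi₀.le hV,
      fun j hj htj => Nat.findGreatest_is_greatest (P := P) htj hj⟩
  have hch : ∀ i < q, LastVisit q p M f (t + i * (p + 1)) (-(((i + 1 : ℕ) : ZMod q) * d)) := by
    intro i
    induction i with
    | zero => intro _; simpa using ht
    | succ i ih =>
      intro hi
      have := T.chain hS hq hd (b := -(((i + 1 + 1 : ℕ) : ZMod q) * d)) (by push_cast; ring)
        (by
          intro h
          have := mul_d_inj hd (i := i + 1) (j := 0) hi (by omega)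
            (by simpa only [neg_eq_zero, Nat.cast_zero, zero_mul] using h)
          omega) (ih (by omega))
      convert this using 1
      ring
  have hend : t + (q - 1) * (p + 1) = M := by
    obtain ⟨h1, h2, h3⟩ := hch (q - 1) (by omega)
    by_contra hne
    refine h3 M le_rfl (by omega) fun k hk => ?_
    rw [T.end_zero hS hq k hk, show q - 1 + 1 = q by omega]
    simp
  refine ⟨t, ?_, fun i hi k hk => (hch i hi).2.1 k hk⟩
  obtain ⟨q', rfl⟩ : ∃ q', q = q' + 1 := ⟨q - 1, by omega⟩
  rw [← hend]; simp; ring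

end Trail

/-! ### From the recursive definition to trails -/

theorem lastN_append_infix_iff {q p M : ℕ} {l : List (ZMod q)} (hl : l.length = M + p + 1)
    (c : ZMod q) : (lastN (p + 2 - 1) l ++ [c] <:+: l) ↔
      ∃ j < M, (∀ k ≤ p, l.getD (j + k) 0 = l.getD (M + k) 0) ∧ l.getD (j + p + 1) 0 = c := by
  have hlast : lastN (p + 2 - 1) l = l.drop M := by unfold lastN; congr 1; omega
  rw [hlast, List.infix_iff_getElem?]
  constructor
  · rintro ⟨j, hj, h⟩
    simp only [List.length_append, List.length_drop, List.length_singleton] at hj h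
    refine ⟨j, by omega, fun k hk => ?_, ?_⟩
    · have := h k (by omega)
      rw [List.getElem_append_left (by simp; omega), List.getElem_drop] at this
      rw [List.getD_eq_getElem?_getD, Nat.add_comm j k, this,
        List.getD_eq_getElem l 0 (by omega)]
      rfl
    · have := h (p + 1) (by omega)
      rw [List.getElem_append_right (by simp; omega)] at this
      rw [List.getD_eq_getElem?_getD, show j + p + 1 = p + 1 + j by omega, this]
      simp
  · rintro ⟨j, hj, h1, h2⟩
    refine ⟨j, by simp; omega, fun k hk => ?_⟩
    simp only [List.length_append, List.length_drop, List.length_singleton] at hk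
    rw [List.getElem?_eq_getElem (by omega), Option.some_inj]
    rcases Nat.lt_or_ge k (p + 1) with hlt | hge
    · rw [List.getElem_append_left (by simp; omega), List.getElem_drop]
      have := h1 k (by omega)
      rw [List.getD_eq_getElem l 0 (by omega), List.getD_eq_getElem l 0 (by omega)] at this
      rw [← this]; congr 1; omega
    · obtain rfl : k = p + 1 := by omega
      rw [List.getElem_append_right (by simp; omega)]
      rw [List.getD_eq_getElem l 0 (by omega)] at h2
      simp only [List.getElem_singleton]
      rw [← h2]; congr 1; omega

theorem OprefL_lastN {q d p M : ℕ} {l : List (ZMod q)} (hl : l.length = M + p + 1) (j : Fin q) :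
    OprefL q d (lastN 1 l) j = l.getD (M + p) 0 + ((j + 1 : ℕ) : ZMod q) * d := by
  unfold OprefL lastN
  rw [show l.length - 1 = M + p by omega, List.drop_eq_getElem_cons (by omega),
    List.getD_eq_getElem l 0 (by omega)]
  rfl

theorem Trail.start (q d p : ℕ) :
    Trail q d p 1 (fun i => (List.replicate (p + 2) (0 : ZMod q)).getD i 0) where
  pos := le_rfl
  begin_zero k hk := by simp
  inj i j hi hj _ := by omega
  greedy i h1 h2 := by omega

theorem Trail.step {q d p M : ℕ} {l : List (ZMod q)} (hd : Nat.Coprime d q)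
    (hl : l.length = M + p + 1) (T : Trail q d p M (fun i => l.getD i 0)) {c : ZMod q}
    (hc : nextDigit q 1 (p + 2) (OprefL q d) l = some c) :
    Trail q d p (M + 1) (fun i => (l ++ [c]).getD i 0) := by
  unfold nextDigit at hc
  rw [List.find?_eq_some_iff_getElem] at hc
  obtain ⟨hnew, i₀, hi₀, hci, hpre⟩ := hc
  simp only [Bool.not_eq_true', decide_eq_false_iff_not, lastN_append_infix_iff hl] at hnew
  simp only [List.length_map, List.length_finRange] at hi₀
  simp only [List.getElem_map, List.getElem_finRange, OprefL_lastN hl] at hci hpre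
  simp only [Fin.val_cast, Bool.not_not, decide_eq_true_eq, lastN_append_infix_iff hl] at hci hpre
  have hold : ∀ i, i < M + p + 1 → (l ++ [c]).getD i 0 = l.getD i 0 := fun i hi =>
    List.getD_append _ _ _ _ (by omega)
  have hend : (l ++ [c]).getD (M + p + 1) 0 = c := by
    rw [List.getD_append_right _ _ _ _ (by omega)]; simp [hl]
  have hnewedge : ∀ j < M, ¬ ∀ k ≤ p + 1, (l ++ [c]).getD (j + k) 0 = (l ++ [c]).getD (M + k) 0 := by
    intro j hj h
    refine hnew ⟨j, hj, fun k hk => ?_, ?_⟩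
    · have := h k (by omega)
      rwa [hold _ (by omega), hold _ (by omega)] at this
    · have := h (p + 1) le_rfl
      rw [hold _ (by omega)] at this
      exact this.trans hend
  refine ⟨by omega, fun k hk => ?_, fun i j hi hj h => ?_, ?_⟩
  · have := T.pos
    exact (hold k (by omega)).trans (T.begin_zero k hk)
  · rcases Nat.lt_or_ge i M with hiM | hiM <;> rcases Nat.lt_or_ge j M with hjM | hjM
    · refine T.inj i j hiM hjM fun k hk => ?_
      have := h k hk
      simpa only [hold _ (show i + k < M + p + 1 by omega),
        hold _ (show j + k < M + p + 1 by omega)] using this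
    · obtain rfl : j = M := by omega
      exact absurd h (hnewedge i hiM)
    · obtain rfl : i = M := by omega
      exact absurd (fun k hk => (h k hk).symm) (hnewedge j hjM)
    · omega
  · intro i h1 hi r' r hr' hrr hrq hr
    rcases Nat.lt_or_ge i M with hiM | hiM
    · rw [hold _ (by omega), hold _ (by omega)] at hr
      obtain ⟨j, hj, h2, h3⟩ := T.greedy i h1 hiM r' r hr' hrr hrq hr
      refine ⟨j, hj, fun k hk => ?_, ?_⟩
      · rw [hold _ (by omega), hold _ (by omega)]; exact h2 k hk
      · rw [hold _ (by omega), hold _ (by omega)]; exact h3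
    · obtain rfl : i = M := by omega
      rw [hend, hold _ (by omega), ← hci] at hr
      -- Ranks in `[1, q]` are unique, so `r` is the position at which `c` was found.
      have hr0 : r - 1 = i₀ := by
        refine mul_d_inj hd (by omega) hi₀ ?_
        have h4 := add_left_cancel hr
        rw [Nat.cast_sub (by omega)]
        push_cast at h4 ⊢
        linear_combination -h4
      obtain ⟨j, hj, h2, h3⟩ := hpre (r' - 1) (by omega)
      refine ⟨j, hj, fun k hk => ?_, ?_⟩
      · rw [hold _ (by omega), hold _ (by omega)]; exact h2 k hk
      · rw [hold _ (by omega), hold _ (by omega), h3, show r' - 1 + 1 = r' by omega]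

theorem stuck_of_nextDigit {q d p M : ℕ} {l : List (ZMod q)} (hq : 2 ≤ q) (hd : Nat.Coprime d q)
    (hl : l.length = M + p + 1) (hc : nextDigit q 1 (p + 2) (OprefL q d) l = none) :
    Stuck q p M (fun i => l.getD i 0) := by
  intro W hW
  unfold nextDigit at hc
  rw [List.find?_eq_none] at hc
  obtain ⟨r, hr1, hrq, hr⟩ := exists_rank hq hd (W (p + 1) - l.getD (M + p) 0)
  have := hc (W (p + 1)) (by
    rw [List.mem_map]
    refine ⟨⟨r - 1, by omega⟩, List.mem_finRange _, ?_⟩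
    rw [OprefL_lastN hl]
    simp only [show r - 1 + 1 = r by omega, ← hr]
    ring)
  simp only [Bool.not_eq_true', decide_eq_false_iff_not, not_not, lastN_append_infix_iff hl] at this
  obtain ⟨j, hj, h1, h2⟩ := this
  refine ⟨j, hj, fun k hk => ?_⟩
  rcases Nat.lt_or_ge k (p + 1) with hlt | hge
  · exact (h1 k (by omega)).trans (hW k (by omega))
  · obtain rfl : k = p + 1 := by omega
    exact h2

theorem Trail.length_le {q d p M : ℕ} {f : ℕ → ZMod q} (hq : 2 ≤ q) (T : Trail q d p M f) :
    M ≤ q ^ (p + 2) := by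
  have : NeZero q := ⟨by omega⟩
  have h := Fintype.card_le_of_injective
    (fun (i : Fin M) (k : Fin (p + 2)) => f (i + k)) (by
      intro i j hij
      exact Fin.ext (T.inj i j i.2 j.2 fun k hk => congrFun hij ⟨k, by omega⟩))
  simpa [ZMod.card] using h

/-- With enough fuel the construction stops because no digit is available: otherwise the trail
would have more than `q ^ n` distinct edges. -/
theorem greedyAux_spec_s7 {q d p : ℕ} (hq : 2 ≤ q) (hd : Nat.Coprime d q) :
    ∀ (F M : ℕ) (l : List (ZMod q)), q ^ (p + 2) < M + F → l.length = M + p + 1 →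
      Trail q d p M (fun i => l.getD i 0) →
      ∃ M', (greedyAux q 1 (p + 2) (OprefL q d) F l).length = M' + p + 1 ∧
        Trail q d p M' (fun i => (greedyAux q 1 (p + 2) (OprefL q d) F l).getD i 0) ∧
        Stuck q p M' (fun i => (greedyAux q 1 (p + 2) (OprefL q d) F l).getD i 0) := by
  intro F
  induction F with
  | zero =>
    intro M l hM _ T
    have := T.length_le hq
    omega
  | succ F ih =>
    intro M l hM hl T
    unfold greedyAux
    cases hc : nextDigit q 1 (p + 2) (OprefL q d) l with
    | none => exact ⟨M, hl, T, stuck_of_nextDigit hq hd hl hc⟩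
    | some c => exact ih (M + 1) (l ++ [c]) (by omega) (by simp [hl]; omega) (T.step hd hl hc)

theorem flatten_blocks {α : Type*} (l : List α) (x₀ : α) (g : ℕ → α) (m t : ℕ) :
    ∀ N, t + N * m ≤ l.length → (∀ i < N, ∀ k < m, l.getD (t + i * m + k) x₀ = g i) →
      ((List.range N).map fun i => List.replicate m (g i)).flatten = (l.drop t).take (N * m) := by
  intro N
  induction N with
  | zero => intros; simp
  | succ N ih =>
    intro hlen h
    rw [Nat.succ_mul] at hlen
    rw [List.range_succ, List.map_append, List.flatten_append,
      ih (by omega) (fun i hi => h i (by omega)), Nat.succ_mul, List.take_add]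
    congr 1
    simp only [List.map_cons, List.map_nil, List.flatten_cons, List.flatten_nil, List.append_nil]
    refine List.ext_getElem (by simp; omega) fun k hk hk' => ?_
    simp only [List.length_replicate] at hk
    have := h N (by omega) k hk
    rw [List.getD_eq_getElem l x₀ (by omega)] at this
    simp [← this]

/-- Set `σ_{q-1-i} = i·(q-1)·d (mod q)` for `i = 1,…,q-1`.
The digits `σ_0,…,σ_{q-2}` are nonzero and pairwise distinct (hence a
rearrangement of `1,…,q-1`), and `o_n` terminates with the suffix
`σ_{q-2}^{n-1} σ_{q-3}^{n-1} ⋯ σ_0^{n-1} 0^{n-1}`; in the suffix below the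
block for `i = 0,…,q-1` is `((i+1)·(q-1)·d mod q)` repeated `n-1` times, the
last block (`i = q-1`) being `0^{n-1}`. -/
theorem oSeq_suffix (q n d : ℕ) (hq : 2 ≤ q) (hn : 2 ≤ n)
    (hd : Nat.Coprime d q) :
    (∀ i, i < q - 1 → (((i + 1) * (q - 1) * d : ℕ) : ZMod q) ≠ 0) ∧
    (∀ i j, i < q - 1 → j < q - 1 →
      (((i + 1) * (q - 1) * d : ℕ) : ZMod q) =
        (((j + 1) * (q - 1) * d : ℕ) : ZMod q) → i = j) ∧
    ((List.range q).map fun i =>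
        List.replicate (n - 1) (((i + 1) * (q - 1) * d : ℕ) : ZMod q)).flatten
      <:+ oSeq q n d := by
  have : NeZero q := ⟨by omega⟩
  have hσ : ∀ i : ℕ, (((i + 1) * (q - 1) * d : ℕ) : ZMod q) = -(((i + 1 : ℕ) : ZMod q) * d) := by
    intro i
    rw [Nat.cast_mul, Nat.cast_mul, Nat.cast_sub (by omega)]
    simp only [CharP.cast_eq_zero, Nat.cast_one]
    ring
  refine ⟨fun i hi h => ?_, fun i j hi hj h => ?_, ?_⟩
  · rw [hσ, neg_eq_zero] at h
    have := mul_d_inj hd (i := i + 1) (j := 0) (by omega) (by omega) (by rw [h]; simp)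
    omega
  · rw [hσ, hσ, neg_inj] at h
    have := mul_d_inj hd (i := i + 1) (j := j + 1) (by omega) (by omega) h
    omega
  · obtain ⟨p, rfl⟩ : ∃ p, n = p + 2 := ⟨n - 2, by omega⟩
    obtain ⟨M, hlen, T, hS⟩ := greedyAux_spec_s7 (p := p) hq hd (q ^ (p + 2)) 1
      (List.replicate (p + 2) 0) (by omega) (by simp; omega) (Trail.start q d p)
    change (oSeq q (p + 2) d).length = _ at hlen
    change Trail q d p M (fun i => (oSeq q (p + 2) d).getD i 0) at T
    change Stuck q p M (fun i => (oSeq q (p + 2) d).getD i 0) at hS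
    obtain ⟨t, ht, hb⟩ := T.blocks hS hq hd
    rw [flatten_blocks (oSeq q (p + 2) d) 0 _ (p + 2 - 1) t q]
    · rw [List.take_of_length_le]
      · exact List.drop_suffix _ _
      · rw [List.length_drop, hlen, ← ht, show p + 2 - 1 = p + 1 by omega]; omega
    · rw [hlen, ← ht, show p + 2 - 1 = p + 1 by omega]
    · intro i hi k hk
      rw [hσ]
      exact hb i hi k (by omega)
end PaperDB
end
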